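/- arXiv:math/0512084 — 13 statements merged into one kernel-verified Lean document; each statement's English description precedes it below -/
import Mathlib

section
/- Given a vielbein, the associated structure matrices (J^a)_X{}^Y = -i Σ_{i,j,A} (σ^a)_i{}^j f_X^{iA} f^Y_{jA} (a = 1,2,3) have real entries and satisfy Σ_Y (J^a)_X{}^Y (J^b)_Y{}^Z = -δ^{ab} δ_X^Z + Σ_c ε^{abc} (J^c)_X{}^Z for all a,b; in other words, they define a quaternionic triple on ℝ^{4r}. -/
noncomputable section

/-- The totally antisymmetric Levi-Civita symbol on `Fin 3`, with `eps3 0 1 2 = 1`. -/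
def eps3 (a b c : Fin 3) : ℝ :=
  (((b.val : ℝ) - (a.val : ℝ)) * ((c.val : ℝ) - (b.val : ℝ)) * ((c.val : ℝ) - (a.val : ℝ))) / 2

/-- The standard Pauli matrices `σ^1, σ^2, σ^3`. -/
def pauli : Fin 3 → Matrix (Fin 2) (Fin 2) ℂ :=
  ![!![0, 1; 1, 0], !![0, -Complex.I; Complex.I, 0], !![1, 0; 0, -1]]

/-- The 2×2 antisymmetric symbol, `eps2 0 1 = 1 = -eps2 1 0` (indices `1,2` are `0,1`). -/
def eps2 (i j : Fin 2) : ℂ := ((j.val : ℂ)) - ((i.val : ℂ))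

/-- A vielbein: mutually inverse complex arrays `f_X^{iA}`, `f^X_{iA}` satisfying the
reality conditions with respect to `ε` and the symplectic matrix `ρ` (with `ρ^{AB}` given
by `rho` and `ρ_{AB}` by `rhoLow`). -/
def IsVielbein {r : ℕ} (rho rhoLow : Fin (2*r) → Fin (2*r) → ℂ)
    (f fUp : Fin (4*r) → Fin 2 → Fin (2*r) → ℂ) : Prop :=
  (∀ A B, rho A B = - rho B A) ∧
  (∀ A B, rhoLow A B = starRingEnd ℂ (rho A B)) ∧
  (∀ A C, (∑ B, rho A B * rhoLow C B) = if A = C then 1 else 0) ∧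
  (∀ X Y, (∑ i, ∑ A, f X i A * fUp Y i A) = if X = Y then 1 else 0) ∧
  (∀ i A j B, (∑ X, f X i A * fUp X j B)
      = (if i = j then 1 else 0) * (if A = B then 1 else 0)) ∧
  (∀ X i A, starRingEnd ℂ (fUp X i A) = ∑ j, ∑ B, eps2 i j * rho A B * fUp X j B) ∧
  (∀ X i A, starRingEnd ℂ (f X i A) = ∑ j, ∑ B, eps2 i j * rhoLow A B * f X j B)

/-- The structure matrices `(J^a)_X{}^Y = -i Σ_{i,j,A} (σ^a)_i{}^j f_X^{iA} f^Y_{jA}`. -/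
def JmatF {r : ℕ} (f fUp : Fin (4*r) → Fin 2 → Fin (2*r) → ℂ) (a : Fin 3)
    (X Y : Fin (4*r)) : ℂ :=
  -Complex.I * ∑ i, ∑ j, ∑ A, pauli a i j * f X i A * fUp Y j A

/-- The contraction of the two vielbein arrays over the symplectic index. -/
def vbT {r : ℕ} (f fUp : Fin (4*r) → Fin 2 → Fin (2*r) → ℂ) (i j : Fin 2)
    (X Y : Fin (4*r)) : ℂ := ∑ A, f X i A * fUp Y j A

lemma JmatF_eq {r : ℕ} (f fUp : Fin (4*r) → Fin 2 → Fin (2*r) → ℂ) (a : Fin 3)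
    (X Y : Fin (4*r)) :
    JmatF f fUp a X Y = -Complex.I * ∑ i, ∑ j, pauli a i j * vbT f fUp i j X Y := by
  simp only [JmatF, vbT, Finset.mul_sum, mul_assoc]

lemma vbT_mul {r : ℕ} (f fUp : Fin (4*r) → Fin 2 → Fin (2*r) → ℂ)
    (h : ∀ i A j B, (∑ X, f X i A * fUp X j B)
      = (if i = j then 1 else 0) * (if A = B then 1 else 0)) (i j k l : Fin 2)
    (X Z : Fin (4*r)) :
    ∑ Y, vbT f fUp i j X Y * vbT f fUp k l Y Z
      = (if k = j then 1 else 0) * vbT f fUp i l X Z := by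
  have h1 : ∑ Y, vbT f fUp i j X Y * vbT f fUp k l Y Z
      = ∑ A, ∑ B, f X i A * fUp Z l B * ∑ Y, f Y k B * fUp Y j A := by
    simp only [vbT, Finset.sum_mul_sum]
    simp only [Finset.mul_sum]
    rw [Finset.sum_comm]
    refine Finset.sum_congr rfl fun A _ => ?_
    rw [Finset.sum_comm]
    refine Finset.sum_congr rfl fun B _ => Finset.sum_congr rfl fun Y _ => ?_
    ring
  rw [h1]
  simp only [h, vbT, Finset.mul_sum]
  refine Finset.sum_congr rfl fun A _ => ?_
  rw [Finset.sum_eq_single A]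
  · simp
  · intro B _ hB; simp [hB]
  · simp

lemma vbT_rho {r : ℕ} (rho rhoLow : Fin (2*r) → Fin (2*r) → ℂ)
    (h1 : ∀ A B, rho A B = - rho B A)
    (h2 : ∀ A B, rhoLow A B = starRingEnd ℂ (rho A B))
    (h3 : ∀ A C, (∑ B, rho A B * rhoLow C B) = if A = C then 1 else 0)
    (u v : Fin (2*r) → ℂ) :
    ∑ A, (∑ B, rhoLow A B * u B) * (∑ C, rho A C * v C) = ∑ B, u B * v B := by
  have h4 : ∀ B C, ∑ A, rhoLow A B * rho A C = if C = B then 1 else 0 := by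
    intro B C
    rw [← h3 C B]
    refine Finset.sum_congr rfl fun A _ => ?_
    rw [h2 A B, h2 B A, h1 A B, h1 A C, map_neg]
    ring
  have h5 : ∑ A, (∑ B, rhoLow A B * u B) * (∑ C, rho A C * v C)
      = ∑ B, ∑ C, u B * v C * ∑ A, rhoLow A B * rho A C := by
    simp only [Finset.sum_mul_sum]
    simp only [Finset.mul_sum]
    rw [Finset.sum_comm]
    refine Finset.sum_congr rfl fun B _ => ?_
    rw [Finset.sum_comm]
    refine Finset.sum_congr rfl fun C _ => Finset.sum_congr rfl fun A _ => ?_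
    ring
  rw [h5]
  simp [h4]

/-- the structure matrices of a vielbein have real entries and satisfy the
quaternion algebra `J^a J^b = -δ^{ab} 𝟙 + Σ_c ε^{abc} J^c`, i.e. they define a
quaternionic triple on `ℝ^{4r}`. -/
theorem stmt1 {r : ℕ} (hr : 1 ≤ r)
    (rho rhoLow : Fin (2*r) → Fin (2*r) → ℂ)
    (f fUp : Fin (4*r) → Fin 2 → Fin (2*r) → ℂ)
    (hviel : IsVielbein rho rhoLow f fUp) :
    (∀ (a : Fin 3) (X Y : Fin (4*r)), (JmatF f fUp a X Y).im = 0) ∧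
    (∀ (a b : Fin 3) (X Z : Fin (4*r)),
      (∑ Y, JmatF f fUp a X Y * JmatF f fUp b Y Z)
        = -(if a = b then 1 else 0) * (if X = Z then 1 else 0)
          + ∑ c, (eps3 a b c : ℂ) * JmatF f fUp c X Z) := by
  obtain ⟨h1, h2, h3, h4, h5, h6, h7⟩ := hviel
  have e00 : eps2 0 0 = 0 := by simp [eps2]
  have e01 : eps2 0 1 = 1 := by simp [eps2]
  have e10 : eps2 1 0 = -1 := by simp [eps2]
  have e11 : eps2 1 1 = 0 := by simp [eps2]
  have f0 : ∀ X A, starRingEnd ℂ (f X 0 A) = ∑ B, rhoLow A B * f X 1 B := by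
    intro X A; rw [h7]; simp [Fin.sum_univ_two, e00, e01]
  have f1 : ∀ X A, starRingEnd ℂ (f X 1 A) = -∑ B, rhoLow A B * f X 0 B := by
    intro X A; rw [h7]; simp [Fin.sum_univ_two, e10, e11]
  have g0 : ∀ X A, starRingEnd ℂ (fUp X 0 A) = ∑ B, rho A B * fUp X 1 B := by
    intro X A; rw [h6]; simp [Fin.sum_univ_two, e00, e01]
  have g1 : ∀ X A, starRingEnd ℂ (fUp X 1 A) = -∑ B, rho A B * fUp X 0 B := by
    intro X A; rw [h6]; simp [Fin.sum_univ_two, e10, e11]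
  have R := vbT_rho rho rhoLow h1 h2 h3
  have c00 : ∀ X Y, starRingEnd ℂ (vbT f fUp 0 0 X Y) = vbT f fUp 1 1 X Y := by
    intro X Y; simp only [vbT, map_sum, map_mul, f0, g0, R]
  have c11 : ∀ X Y, starRingEnd ℂ (vbT f fUp 1 1 X Y) = vbT f fUp 0 0 X Y := by
    intro X Y; simp only [vbT, map_sum, map_mul, f1, g1, neg_mul_neg, R]
  have c01 : ∀ X Y, starRingEnd ℂ (vbT f fUp 0 1 X Y) = -vbT f fUp 1 0 X Y := by
    intro X Y
    simp only [vbT, map_sum, map_mul, f0, g1, mul_neg, Finset.sum_neg_distrib, R]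
  have c10 : ∀ X Y, starRingEnd ℂ (vbT f fUp 1 0 X Y) = -vbT f fUp 0 1 X Y := by
    intro X Y
    simp only [vbT, map_sum, map_mul, f1, g0, neg_mul, Finset.sum_neg_distrib, R]
  constructor
  · intro a X Y
    rw [← Complex.conj_eq_iff_im, JmatF_eq]
    fin_cases a <;>
      simp [Fin.sum_univ_two, pauli, c00, c11, c01, c10] <;> ring
  · intro a b X Z
    have hT : vbT f fUp 0 0 X Z + vbT f fUp 1 1 X Z = if X = Z then 1 else 0 := by
      rw [← h4 X Z, Fin.sum_univ_two]; rfl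
    have key : (∑ Y, JmatF f fUp a X Y * JmatF f fUp b Y Z)
        = -∑ i, ∑ l, (pauli a * pauli b) i l * vbT f fUp i l X Z := by
      have M := vbT_mul f fUp h5
      have e : ∀ Y, JmatF f fUp a X Y * JmatF f fUp b Y Z
          = -∑ i, ∑ j, ∑ k, ∑ l, pauli a i j * pauli b k l *
            (vbT f fUp i j X Y * vbT f fUp k l Y Z) := by
        intro Y
        rw [JmatF_eq, JmatF_eq]
        simp only [Fin.sum_univ_two]
        linear_combination (norm := ring_nf) (∑ i, ∑ j, pauli a i j * vbT f fUp i j X Y) *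
          (∑ k, ∑ l, pauli b k l * vbT f fUp k l Y Z) * Complex.I_sq
        simp only [Fin.sum_univ_two]
        ring
      simp only [e, Fin.sum_univ_two, Finset.sum_neg_distrib, Finset.sum_add_distrib,
        ← Finset.mul_sum, M, Matrix.mul_apply]
      simp
      ring
    rw [key, ← hT]
    simp only [JmatF_eq, Fin.sum_univ_two, Fin.sum_univ_three, Matrix.mul_apply]
    fin_cases a <;> fin_cases b <;>
      simp [pauli, eps3] <;> ring_nf <;> simp <;> ring
end
end

section
/- Let U ⊆ ℝ^{4r} be open and let f^X_{iA}, f_X^{iA} be a smooth field of vielbeins on U. Suppose there are smooth functions Γ_{YZ}{}^X (connection coefficients) and ω̂_{YA}{}^B (a GL(r,ℍ)-connection 1-form) on U such that for all indices ∂_Y f^X_{iA} - Σ_B ω̂_{YA}{}^B f^X_{iB} + Σ_Z f^Z_{iA} Γ_{YZ}{}^X = 0 on U. Then the smooth fields of structure matrices J^a (a = 1,2,3) are covariantly constant: ∂_Y (J^a)_X{}^Z + Σ_W Γ_{YW}{}^Z (J^a)_X{}^W - Σ_W Γ_{YX}{}^W (J^a)_W{}^Z = 0 on U for all a, X, Y,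 Z. -/
noncomputable section

lemma fderiv_sum_mul_aux {n : ℕ} {κ : Type*} [Fintype κ]
    (a b : κ → (Fin n → ℝ) → ℂ) (p v : Fin n → ℝ)
    (ha : ∀ k, DifferentiableAt ℝ (a k) p) (hb : ∀ k, DifferentiableAt ℝ (b k) p) :
    fderiv ℝ (fun q => ∑ k, a k q * b k q) p v
      = (∑ k, fderiv ℝ (a k) p v * b k p) + ∑ k, a k p * fderiv ℝ (b k) p v := by
  have h : HasFDerivAt (fun q => ∑ k, a k q * b k q)
      (∑ k, (a k p • fderiv ℝ (b k) p + b k p • fderiv ℝ (a k) p)) p :=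
    HasFDerivAt.fun_sum fun k _ => (ha k).hasFDerivAt.mul (hb k).hasFDerivAt
  rw [h.fderiv, sum_apply, ← Finset.sum_add_distrib]
  refine Finset.sum_congr rfl fun k _ => ?_
  simp
  ring

/-- Pure matrix algebra behind the covariant constancy. -/
lemma matrix_aux {m n : Type*} [Fintype m] [Fintype n] [DecidableEq m] [DecidableEq n]
    (F dF : Matrix n m ℂ) (E dE : Matrix m n ℂ) (S Ω : Matrix m m ℂ) (G : Matrix n n ℂ)
    (hEF : E * F = 1) (hFE : F * E = 1) (hd : dF * E + F * dE = 0) (hc : S * Ω = Ω * S)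
    (hdE : dE = Ω * E - E * G) :
    dF * (S * E) + F * (S * dE) + F * (S * E) * G - G * (F * (S * E)) = 0 := by
  have h1 : dF = G * F - F * Ω := by
    have : dF = (dF * E) * F := by rw [Matrix.mul_assoc, hEF, Matrix.mul_one]
    rw [this, eq_neg_of_add_eq_zero_left hd, hdE]
    have e1 : F * (Ω * E - E * G) * F = F * Ω * (E * F) - (F * E) * (G * F) := by
      simp only [Matrix.mul_sub, Matrix.sub_mul, Matrix.mul_assoc]
    rw [Matrix.neg_mul, e1, hEF, hFE, Matrix.mul_one, Matrix.one_mul, neg_sub]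
  have h2 : F * (S * (Ω * E)) = F * (Ω * (S * E)) := by
    rw [← Matrix.mul_assoc S, hc, Matrix.mul_assoc]
  rw [h1, hdE]
  simp only [Matrix.mul_sub, Matrix.sub_mul, Matrix.mul_assoc, h2]
  abel

/-- if a smooth field of vielbeins on an open set `U ⊆ ℝ^{4r}` is covariantly
constant with respect to connection coefficients `Γ` and a `GL(r,ℍ)`-connection `ω̂`, then
the structure matrices are covariantly constant with respect to `Γ`. -/
theorem stmt3 {r : ℕ} (hr : 1 ≤ r)
    (U : Set (Fin (4*r) → ℝ)) (hU : IsOpen U)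
    (rho rhoLow : Fin (2*r) → Fin (2*r) → ℂ)
    (f fUp : (Fin (4*r) → ℝ) → Fin (4*r) → Fin 2 → Fin (2*r) → ℂ)
    (hf : ∀ X i A, ContDiffOn ℝ (⊤ : ℕ∞) (fun p => f p X i A) U)
    (hfUp : ∀ X i A, ContDiffOn ℝ (⊤ : ℕ∞) (fun p => fUp p X i A) U)
    (hviel : ∀ p ∈ U, IsVielbein rho rhoLow (f p) (fUp p))
    (Γ : (Fin (4*r) → ℝ) → Fin (4*r) → Fin (4*r) → Fin (4*r) → ℝ)
    (ωhat : (Fin (4*r) → ℝ) → Fin (4*r) → Fin (2*r) → Fin (2*r) → ℂ)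
    (hΓ : ∀ Y Z X, ContDiffOn ℝ (⊤ : ℕ∞) (fun p => Γ p Y Z X) U)
    (hωhat : ∀ Y A B, ContDiffOn ℝ (⊤ : ℕ∞) (fun p => ωhat p Y A B) U)
    (heq : ∀ p ∈ U, ∀ (Y X : Fin (4*r)) (i : Fin 2) (A : Fin (2*r)),
      fderiv ℝ (fun q => fUp q X i A) p (Pi.single Y 1)
        - (∑ B, ωhat p Y A B * fUp p X i B)
        + (∑ Z, fUp p Z i A * (Γ p Y Z X : ℂ)) = 0) :
    ∀ p ∈ U, ∀ (a : Fin 3) (Y X Z : Fin (4*r)),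
      fderiv ℝ (fun q => JmatF (f q) (fUp q) a X Z) p (Pi.single Y 1)
        + (∑ W, (Γ p Y W Z : ℂ) * JmatF (f p) (fUp p) a X W)
        - (∑ W, (Γ p Y X W : ℂ) * JmatF (f p) (fUp p) a W Z) = 0 := by
  intro p hp a Y X Z
  have hnhds : U ∈ nhds p := hU.mem_nhds hp
  have df : ∀ X i A, DifferentiableAt ℝ (fun p => f p X i A) p := fun X i A =>
    ((hf X i A).contDiffAt hnhds).differentiableAt (by simp)
  have dfUp : ∀ X i A, DifferentiableAt ℝ (fun p => fUp p X i A) p := fun X i A =>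
    ((hfUp X i A).contDiffAt hnhds).differentiableAt (by simp)
  obtain ⟨-, -, -, h4, h5, -, -⟩ := hviel p hp
  let v : Fin (4*r) → ℝ := Pi.single Y 1
  let F : Matrix (Fin (4*r)) (Fin 2 × Fin (2*r)) ℂ := fun X k => f p X k.1 k.2
  let dF : Matrix (Fin (4*r)) (Fin 2 × Fin (2*r)) ℂ :=
    fun X k => fderiv ℝ (fun q => f q X k.1 k.2) p v
  let E : Matrix (Fin 2 × Fin (2*r)) (Fin (4*r)) ℂ := fun k X => fUp p X k.1 k.2
  let dE : Matrix (Fin 2 × Fin (2*r)) (Fin (4*r)) ℂ :=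
    fun k X => fderiv ℝ (fun q => fUp q X k.1 k.2) p v
  let S : Matrix (Fin 2 × Fin (2*r)) (Fin 2 × Fin (2*r)) ℂ :=
    Matrix.kroneckerMap (· * ·) (pauli a) (1 : Matrix (Fin (2*r)) (Fin (2*r)) ℂ)
  let Ω : Matrix (Fin 2 × Fin (2*r)) (Fin 2 × Fin (2*r)) ℂ :=
    Matrix.kroneckerMap (· * ·) (1 : Matrix (Fin 2) (Fin 2) ℂ) (Matrix.of fun A B => ωhat p Y A B)
  let G : Matrix (Fin (4*r)) (Fin (4*r)) ℂ := fun Z X => (Γ p Y Z X : ℂ)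
  have hFE : F * E = 1 := by
    ext X Y
    rw [Matrix.mul_apply, Fintype.sum_prod_type, Matrix.one_apply]
    exact h4 X Y
  have hEF : E * F = 1 := by
    ext ⟨i, A⟩ ⟨j, B⟩
    rw [Matrix.mul_apply, Matrix.one_apply]
    have := h5 j B i A
    simp only [F, E]
    simp_rw [mul_comm (fUp p _ _ _)]
    rw [this]
    by_cases h : i = j <;> by_cases h' : A = B <;> simp [h, h', eq_comm]
  have hd : dF * E + F * dE = 0 := by
    ext X W
    have h1 := fderiv_sum_mul_aux (κ := Fin 2 × Fin (2*r)) (fun k q => f q X k.1 k.2)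
      (fun k q => fUp q W k.1 k.2) p v (fun k => df _ _ _) (fun k => dfUp _ _ _)
    rw [Matrix.add_apply, Matrix.mul_apply, Matrix.mul_apply, Matrix.zero_apply]
    refine h1.symm.trans ?_
    have h2 : (fun q => ∑ k : Fin 2 × Fin (2*r), f q X k.1 k.2 * fUp q W k.1 k.2)
        =ᶠ[nhds p] fun _ => (if X = W then 1 else 0 : ℂ) := by
      filter_upwards [hnhds] with q hq
      rw [Fintype.sum_prod_type]
      exact (hviel q hq).2.2.2.1 X W
    rw [h2.fderiv_eq]
    simp
  have hc : S * Ω = Ω * S := by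
    simp only [S, Ω]
    rw [← Matrix.mul_kronecker_mul, ← Matrix.mul_kronecker_mul]
    simp
  have hdE : dE = Ω * E - E * G := by
    ext ⟨i, A⟩ W
    have h := heq p hp Y W i A
    rw [Matrix.sub_apply, Matrix.mul_apply, Matrix.mul_apply, Fintype.sum_prod_type]
    have e : ∑ x, ∑ y, Ω (i, A) (x, y) * E (x, y) W = ∑ B, ωhat p Y A B * fUp p W i B := by
      rw [Finset.sum_eq_single i]
      · simp [Ω, E]
      · intro j _ hj
        simp [Ω, hj.symm]
      · simp
    rw [e]
    linear_combination h
  have key := matrix_aux F dF E dE S Ω G hEF hFE hd hc hdE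
  have hS : ∀ (M : Fin (4*r) → Fin 2 → Fin (2*r) → ℂ) (W : Fin (4*r)) (i : Fin 2) (A : Fin (2*r)),
      (∑ k, S (i, A) k * M W k.1 k.2) = ∑ j, pauli a i j * M W j A := by
    intro M W i A
    rw [Fintype.sum_prod_type]
    refine Finset.sum_congr rfl fun j _ => ?_
    simp [S, Matrix.one_apply]
  have hJ : ∀ q X W, JmatF (f q) (fUp q) a X W = -Complex.I *
      ∑ k : Fin 2 × Fin (2*r), f q X k.1 k.2 * ∑ j, pauli a k.1 j * fUp q W j k.2 := by
    intro q X W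
    rw [JmatF, Fintype.sum_prod_type]
    congr 1
    refine Finset.sum_congr rfl fun i _ => ?_
    rw [Finset.sum_comm]
    refine Finset.sum_congr rfl fun A _ => ?_
    rw [Finset.mul_sum]
    refine Finset.sum_congr rfl fun j _ => ?_
    ring
  have hJp : ∀ X W, JmatF (f p) (fUp p) a X W = -Complex.I * (F * (S * E)) X W := by
    intro X W
    rw [hJ, Matrix.mul_apply]
    congr 1
    refine Finset.sum_congr rfl fun k _ => ?_
    rw [Matrix.mul_apply]
    exact congrArg _ (hS (fUp p) W k.1 k.2).symm
  have hinner : ∀ k : Fin 2 × Fin (2*r), HasFDerivAt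
      (fun q => ∑ j, pauli a k.1 j * fUp q Z j k.2)
      (∑ j, pauli a k.1 j • fderiv ℝ (fun q => fUp q Z j k.2) p) p := fun k =>
    HasFDerivAt.fun_sum fun j _ => (dfUp Z j k.2).hasFDerivAt.const_mul _
  have hdJ : fderiv ℝ (fun q => JmatF (f q) (fUp q) a X Z) p v
      = -Complex.I * ((dF * (S * E)) X Z + (F * (S * dE)) X Z) := by
    have h1 := fderiv_sum_mul_aux (κ := Fin 2 × Fin (2*r)) (fun k q => f q X k.1 k.2)
      (fun k q => ∑ j, pauli a k.1 j * fUp q Z j k.2) p v (fun k => df _ _ _)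
      (fun k => (hinner k).differentiableAt)
    simp_rw [hJ]
    have hdiff : DifferentiableAt ℝ (fun q => ∑ k : Fin 2 × Fin (2*r),
        f q X k.1 k.2 * ∑ j, pauli a k.1 j * fUp q Z j k.2) p :=
      DifferentiableAt.fun_sum fun k _ => (df _ _ _).mul (hinner k).differentiableAt
    rw [fderiv_const_mul hdiff]
    rw [ContinuousLinearMap.smul_apply, h1, smul_eq_mul, Matrix.mul_apply, Matrix.mul_apply]
    congr 2
    · refine Finset.sum_congr rfl fun k _ => ?_
      rw [Matrix.mul_apply]
      exact congrArg _ (hS (fUp p) Z k.1 k.2).symm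
    · refine Finset.sum_congr rfl fun k _ => ?_
      rw [Matrix.mul_apply, (hinner k).fderiv, sum_apply]
      refine congrArg _ ?_
      exact (hS (fun X i A => fderiv ℝ (fun q => fUp q X i A) p v) Z k.1 k.2).symm
  have hk := congrFun (congrFun key X) Z
  rw [Matrix.sub_apply, Matrix.add_apply, Matrix.add_apply, Matrix.zero_apply,
    Matrix.mul_apply (M := F * (S * E)), Matrix.mul_apply (M := G)] at hk
  have s1 : (∑ W, (Γ p Y W Z : ℂ) * JmatF (f p) (fUp p) a X W)
      = -Complex.I * ∑ W, (F * (S * E)) X W * G W Z := by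
    rw [Finset.mul_sum]
    refine Finset.sum_congr rfl fun W _ => ?_
    rw [hJp]
    simp only [G]
    ring
  have s2 : (∑ W, (Γ p Y X W : ℂ) * JmatF (f p) (fUp p) a W Z)
      = -Complex.I * ∑ W, G X W * (F * (S * E)) W Z := by
    rw [Finset.mul_sum]
    refine Finset.sum_congr rfl fun W _ => ?_
    rw [hJp]
    simp only [G]
    ring
  rw [s1, s2]
  refine (congrArg (fun t => t + _ - _) hdJ).trans ?_
  linear_combination (-Complex.I) * hk
end
end

section
/- Let U ⊆ ℝ^{4r} be open, let f^X_{iA}, f_X^{iA} be a smooth field of vielbeins on U, and suppose smooth functions Γ_{XY}{}^Z, ω_{Xj}{}^i (2×2 valued) and ω̂_{XB}{}^A (2r×2r valued) on U satisfy ∂_X f_Y^{iA} - Σ_Z Γ_{XY}{}^Z f_Z^{iA} + Σ_j f_Y^{jA} ω_{Xj}{}^i + Σ_B f_Y^{iB} ω̂_{XB}{}^A = 0 for all indices. Define the curvatures R_{XYW}{}^Z = ∂_X Γ_{YW}{}^Z - ∂_Y Γ_{XW}{}^Z + Σ_V (Γ_{XV}{}^Z Γ_{YW}{}^V - Γ_{YV}{}^Z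 Γ_{XW}{}^V), 𝓡_{XYj}{}^i = ∂_X ω_{Yj}{}^i - ∂_Y ω_{Xj}{}^i + Σ_k (ω_{Xk}{}^i ω_{Yj}{}^k - ω_{Yk}{}^i ω_{Xj}{}^k), and 𝓡̂_{XYB}{}^A = ∂_X ω̂_{YB}{}^A - ∂_Y ω̂_{XB}{}^A + Σ_C (ω̂_{XC}{}^A ω̂_{YB}{}^C - ω̂_{YC}{}^A ω̂_{XB}{}^C). Then on U the curvature of Γ decomposes through the vielbein as R_{XYW}{}^Z = Σ_{i,j,A} f^Z_{iA} 𝓡_{XYj}{}^i f_W^{jA} + Σ_{i,A,B} f^Z_{iA} 𝓡̂_{XYB}{}^A f_W^{iB} for all X, Y, W, Z. -/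
noncomputable section

/-- A vielbein (for this statement): mutually inverse complex arrays. -/
def IsVielbeinInv {r : ℕ} (f fUp : Fin (4*r) → Fin 2 → Fin (2*r) → ℂ) : Prop :=
  (∀ X Y, (∑ i, ∑ A, f X i A * fUp Y i A) = if X = Y then 1 else 0) ∧
  (∀ i A j B, (∑ X, f X i A * fUp X j B)
      = (if i = j then 1 else 0) * (if A = B then 1 else 0))

/-- Curvature `R_{XYW}{}^Z` of the affine connection `Γ`. -/
def curvGamma {n : ℕ} (Γ : (Fin n → ℝ) → Fin n → Fin n → Fin n → ℝ)
    (p : Fin n → ℝ) (X Y W Z : Fin n) : ℝ :=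
  fderiv ℝ (fun q => Γ q Y W Z) p (Pi.single X 1)
    - fderiv ℝ (fun q => Γ q X W Z) p (Pi.single Y 1)
    + ∑ V, (Γ p X V Z * Γ p Y W V - Γ p Y V Z * Γ p X W V)

/-- Curvature `𝓡_{XY j}{}^i` of a matrix-valued connection `ω_{X j}{}^i`. -/
def curvConn {n : ℕ} {ι : Type*} [Fintype ι]
    (ω : (Fin n → ℝ) → Fin n → ι → ι → ℂ) (p : Fin n → ℝ) (X Y : Fin n) (j i : ι) : ℂ :=
  fderiv ℝ (fun q => ω q Y j i) p (Pi.single X 1)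
    - fderiv ℝ (fun q => ω q X j i) p (Pi.single Y 1)
    + ∑ k, (ω p X k i * ω p Y j k - ω p Y k i * ω p X j k)

open Matrix in
lemma alg_aux {n a b : ℕ} (G₁ G₂ d₁₂ d₂₁ : Fin n → Fin n → ℂ) (F D₁ D₂ : Fin n → Matrix (Fin a) (Fin b) ℂ)
    (w₁ w₂ e₁₂ e₂₁ : Matrix (Fin a) (Fin a) ℂ) (h₁ h₂ k₁₂ k₂₁ : Matrix (Fin b) (Fin b) ℂ)
    (hD₁ : ∀ W, D₁ W = ∑ V, G₁ W V • F V - w₁ * F W - F W * h₁)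
    (hD₂ : ∀ W, D₂ W = ∑ V, G₂ W V • F V - w₂ * F W - F W * h₂)
    (W : Fin n)
    (hS : ∑ V, (d₁₂ W V • F V + G₂ W V • D₁ V) - (w₂ * D₁ W + e₁₂ * F W)
        - (D₁ W * h₂ + F W * k₁₂)
      = ∑ V, (d₂₁ W V • F V + G₁ W V • D₂ V) - (w₁ * D₂ W + e₂₁ * F W)
        - (D₂ W * h₁ + F W * k₂₁)) :
    ∑ Z, (d₁₂ W Z - d₂₁ W Z + ∑ V, (G₁ V Z * G₂ W V - G₂ V Z * G₁ W V)) • F Z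
      = (e₁₂ - e₂₁ + (w₁ * w₂ - w₂ * w₁)) * F W + F W * (k₁₂ - k₂₁ + (h₂ * h₁ - h₁ * h₂)) := by
  have c : ∀ P Q : Fin n → Fin n → ℂ, ∑ Z, (∑ V, P V Z * Q W V) • F Z
      = ∑ V, Q W V • ∑ Z, P V Z • F Z := by
    intro P Q
    simp only [Finset.sum_smul, Finset.smul_sum, smul_smul]
    rw [Finset.sum_comm]
    simp only [mul_comm]
  simp only [hD₁, hD₂, smul_sub, Finset.sum_add_distrib, Finset.sum_sub_distrib,
    Matrix.mul_sub, Matrix.sub_mul, Matrix.mul_sum, Matrix.sum_mul, Matrix.mul_smul,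
    Matrix.smul_mul, Matrix.mul_assoc] at hS
  simp only [add_smul, sub_smul, Finset.sum_add_distrib, Finset.sum_sub_distrib, c,
    Matrix.mul_sub, Matrix.sub_mul, Matrix.mul_add, Matrix.add_mul, Matrix.mul_assoc]
  rw [← sub_eq_zero] at hS ⊢
  rw [← hS]
  abel

/-- integrability of the covariant constancy of the vielbein: the curvature
of `Γ` decomposes through the vielbein into the SU(2) curvature of `ω` and the
`GL(r,ℍ)` curvature of `ω̂`. -/
theorem stmt4 {r : ℕ} (hr : 1 ≤ r)
    (U : Set (Fin (4*r) → ℝ)) (hU : IsOpen U)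
    (f fUp : (Fin (4*r) → ℝ) → Fin (4*r) → Fin 2 → Fin (2*r) → ℂ)
    (hf : ∀ X i A, ContDiffOn ℝ (⊤ : ℕ∞) (fun p => f p X i A) U)
    (hfUp : ∀ X i A, ContDiffOn ℝ (⊤ : ℕ∞) (fun p => fUp p X i A) U)
    (hviel : ∀ p ∈ U, IsVielbeinInv (f p) (fUp p))
    (Γ : (Fin (4*r) → ℝ) → Fin (4*r) → Fin (4*r) → Fin (4*r) → ℝ)
    (ω : (Fin (4*r) → ℝ) → Fin (4*r) → Fin 2 → Fin 2 → ℂ)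
    (ωhat : (Fin (4*r) → ℝ) → Fin (4*r) → Fin (2*r) → Fin (2*r) → ℂ)
    (hΓ : ∀ X Y Z, ContDiffOn ℝ (⊤ : ℕ∞) (fun p => Γ p X Y Z) U)
    (hω : ∀ X j i, ContDiffOn ℝ (⊤ : ℕ∞) (fun p => ω p X j i) U)
    (hωhat : ∀ X A B, ContDiffOn ℝ (⊤ : ℕ∞) (fun p => ωhat p X A B) U)
    (heq : ∀ p ∈ U, ∀ (X Y : Fin (4*r)) (i : Fin 2) (A : Fin (2*r)),
      fderiv ℝ (fun q => f q Y i A) p (Pi.single X 1)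
        - (∑ Z, (Γ p X Y Z : ℂ) * f p Z i A)
        + (∑ j, f p Y j A * ω p X j i)
        + (∑ B, f p Y i B * ωhat p X B A) = 0) :
    ∀ p ∈ U, ∀ X Y W Z : Fin (4*r),
      (curvGamma Γ p X Y W Z : ℂ)
        = (∑ i, ∑ j, ∑ A, fUp p Z i A * curvConn ω p X Y j i * f p W j A)
          + ∑ i, ∑ A, ∑ B, fUp p Z i A * curvConn ωhat p X Y B A * f p W i B := by
  intro p hp X Y W Z
  have hUp := hU.mem_nhds hp
  have dAt : ∀ {g : (Fin (4*r) → ℝ) → ℂ}, ContDiffOn ℝ (⊤ : ℕ∞) g U →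
      DifferentiableAt ℝ g p := fun h => (h.contDiffAt hUp).differentiableAt (by simp)
  have hΓc : ∀ X Y Z, HasFDerivAt (fun q => (Γ q X Y Z : ℂ))
      (Complex.ofRealCLM.comp (fderiv ℝ (fun q => Γ q X Y Z) p)) p := fun X Y Z =>
    Complex.ofRealCLM.hasFDerivAt.comp p
      (((hΓ X Y Z).contDiffAt hUp).differentiableAt (by simp)).hasFDerivAt
  have second : ∀ (X Y : Fin (4*r)) (i : Fin 2) (A : Fin (2*r)),
      fderiv ℝ (fun q => fderiv ℝ (fun q => f q W i A) q) p (Pi.single X 1) (Pi.single Y 1)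
      = ∑ V, (((fderiv ℝ (fun q => Γ q Y W V) p (Pi.single X 1) : ℝ) : ℂ) * f p V i A
            + (Γ p Y W V : ℂ) * fderiv ℝ (fun q => f q V i A) p (Pi.single X 1))
        - ∑ j, (fderiv ℝ (fun q => f q W j A) p (Pi.single X 1) * ω p Y j i
            + f p W j A * fderiv ℝ (fun q => ω q Y j i) p (Pi.single X 1))
        - ∑ B, (fderiv ℝ (fun q => f q W i B) p (Pi.single X 1) * ωhat p Y B A
            + f p W i B * fderiv ℝ (fun q => ωhat q Y B A) p (Pi.single X 1)) := by
    intro X Y i A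
    have hd : DifferentiableAt ℝ (fun q => fderiv ℝ (fun q => f q W i A) q) p :=
      (((hf W i A).contDiffAt hUp).fderiv_right (m := 1) (by norm_cast)).differentiableAt (by simp)
    have h1 : HasFDerivAt (fun q => fderiv ℝ (fun q => f q W i A) q (Pi.single Y 1))
        ((fderiv ℝ (fun q => fderiv ℝ (fun q => f q W i A) q) p).flip (Pi.single Y 1)) p := by
      simpa using hd.hasFDerivAt.clm_apply (hasFDerivAt_const (Pi.single Y (1:ℝ)) p)
    have h2 : HasFDerivAt (fun q => (∑ V, (Γ q Y W V : ℂ) * f q V i A)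
        - (∑ j, f q W j A * ω q Y j i) - (∑ B, f q W i B * ωhat q Y B A)) _ p :=
      ((HasFDerivAt.fun_sum fun V _ => (hΓc Y W V).mul (dAt (hf V i A)).hasFDerivAt).sub
        (HasFDerivAt.fun_sum fun j _ =>
          (dAt (hf W j A)).hasFDerivAt.mul (dAt (hω Y j i)).hasFDerivAt)).sub
        (HasFDerivAt.fun_sum fun B _ =>
          (dAt (hf W i B)).hasFDerivAt.mul (dAt (hωhat Y B A)).hasFDerivAt)
    have h3 := h2.congr_of_eventuallyEq
      (f₁ := fun q => fderiv ℝ (fun q => f q W i A) q (Pi.single Y 1)) (by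
        filter_upwards [hUp] with q hq
        linear_combination heq q hq Y W i A)
    have h4 := congrArg (fun L => L (Pi.single X 1)) (h1.unique h3)
    simp only [ContinuousLinearMap.flip_apply] at h4
    rw [h4]
    simp only [ContinuousLinearMap.sub_apply, ContinuousLinearMap.sum_apply,
      ContinuousLinearMap.add_apply, ContinuousLinearMap.smul_apply,
      ContinuousLinearMap.comp_apply, smul_eq_mul, Complex.ofRealCLM_apply]
    congr 1
    · congr 1
      · exact Finset.sum_congr rfl fun V _ => by ring
      · exact Finset.sum_congr rfl fun V _ => by ring
    · exact Finset.sum_congr rfl fun V _ => by ring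
  have key : ∀ (i : Fin 2) (A : Fin (2*r)), ∑ V, (curvGamma Γ p X Y W V : ℂ) * f p V i A
      = (∑ j, curvConn ω p X Y j i * f p W j A) + ∑ B, curvConn ωhat p X Y B A * f p W i B := by
    have hD : ∀ (X W : Fin (4*r)),
        (Matrix.of fun i A => fderiv ℝ (fun q => f q W i A) p (Pi.single X 1))
        = ∑ V, (Γ p X W V : ℂ) • (Matrix.of (f p V)) - (Matrix.of fun i j => ω p X j i)
            * Matrix.of (f p W) - Matrix.of (f p W) * Matrix.of (ωhat p X) := by
      intro X W
      ext i A
      simp only [Matrix.sub_apply, Matrix.sum_apply, Matrix.smul_apply, Matrix.mul_apply,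
        Matrix.of_apply, smul_eq_mul]
      simp only [mul_comm (ω _ _ _ _)]
      linear_combination heq p hp X W i A
    have := alg_aux (fun W V => (Γ p X W V : ℂ)) (fun W V => (Γ p Y W V : ℂ))
      (fun W V => ((fderiv ℝ (fun q => Γ q Y W V) p (Pi.single X 1) : ℝ) : ℂ))
      (fun W V => ((fderiv ℝ (fun q => Γ q X W V) p (Pi.single Y 1) : ℝ) : ℂ))
      (fun V => Matrix.of (f p V)) _ _ _ _
      (Matrix.of fun i j => fderiv ℝ (fun q => ω q Y j i) p (Pi.single X 1))
      (Matrix.of fun i j => fderiv ℝ (fun q => ω q X j i) p (Pi.single Y 1)) _ _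
      (Matrix.of fun B A => fderiv ℝ (fun q => ωhat q Y B A) p (Pi.single X 1))
      (Matrix.of fun B A => fderiv ℝ (fun q => ωhat q X B A) p (Pi.single Y 1))
      (hD X) (hD Y) W (by
        ext i A
        have hs : IsSymmSndFDerivAt ℝ (fun q => f q W i A) p :=
          ((hf W i A).contDiffAt hUp).isSymmSndFDerivAt (by simp; norm_cast)
        have := hs (Pi.single X 1) (Pi.single Y 1)
        erw [second X Y i A, second Y X i A] at this
        simp only [Matrix.sub_apply, Matrix.sum_apply, Matrix.smul_apply, Matrix.mul_apply,
          Matrix.add_apply, Matrix.of_apply, smul_eq_mul]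
        simp only [Finset.sum_add_distrib] at this ⊢
        simp only [mul_comm (ω _ _ _ _), mul_comm (fderiv ℝ (fun q => ω q _ _ _) _ _)]
        exact this)
    intro i A
    have := congrFun (congrFun this i) A
    simp only [Matrix.sub_apply, Matrix.sum_apply, Matrix.smul_apply, Matrix.mul_apply,
          Matrix.add_apply, Matrix.of_apply, smul_eq_mul] at this
    simp only [curvGamma, curvConn]
    push_cast
    rw [this]
    congr 1
    · refine Finset.sum_congr rfl fun j _ => ?_
      rw [Finset.sum_sub_distrib]
    · refine Finset.sum_congr rfl fun j _ => ?_
      rw [Finset.sum_sub_distrib, mul_comm]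
      simp only [mul_comm]
  have e1 : (curvGamma Γ p X Y W Z : ℂ)
      = ∑ i, ∑ A, fUp p Z i A * ∑ V, (curvGamma Γ p X Y W V : ℂ) * f p V i A := by
    calc (curvGamma Γ p X Y W Z : ℂ)
        = ∑ V, (curvGamma Γ p X Y W V : ℂ) * ∑ i, ∑ A, f p V i A * fUp p Z i A := by
          simp [(hviel p hp).1]
      _ = _ := by
          simp only [Finset.mul_sum]
          rw [Finset.sum_comm]
          refine Finset.sum_congr rfl fun i _ => ?_
          rw [Finset.sum_comm]
          exact Finset.sum_congr rfl fun A _ => Finset.sum_congr rfl fun V _ => by ring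
  rw [e1]
  simp only [key, mul_add, Finset.sum_add_distrib, Finset.mul_sum, ← mul_assoc]
  congr 1
  exact Finset.sum_congr rfl fun i _ => Finset.sum_comm
end
end

section
/- Fix a vielbein with associated structure matrices J^a and matrices L(A,B)_W{}^Z = Σ_i f^Z_{iA} f_W^{iB}. Let R_{XYW}{}^Z be a complex array (X,Y,W,Z ∈ {1,...,4r}) that is antisymmetric in (X,Y), satisfies the first Bianchi identity R_{XYW}{}^Z + R_{YWX}{}^Z + R_{WXY}{}^Z = 0, and admits a decomposition R_{XYW}{}^Z = -Σ_a 𝓑^a_{XY} (J^a)_W{}^Z + Σ_{A,B} 𝓒_{XYB}{}^A L(A,B)_W{}^Z for some arrays 𝓑^a_{XY} and 𝓒_{XYB}{}^A. Then the Ricci tensor Ric_{XY} := Σ_Z R_{ZXY}{}^Z has antisymmetric part (Ric_{XY} - Ric_{YX})/2 = -Σ_A 𝓒_{XYA}{}^A; in particular, if the symmetric array Ric is symmetric then Σ_A 𝓒_{XYA}{}^A = 0. -/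
noncomputable section

/-- The matrices `L(A,B)_W{}^Z = Σ_i f^Z_{iA} f_W^{iB}`. -/
def LmatF {r : ℕ} (f fUp : Fin (4*r) → Fin 2 → Fin (2*r) → ℂ)
    (A B : Fin (2*r)) (W Z : Fin (4*r)) : ℂ :=
  ∑ i, fUp Z i A * f W i B

/-- for a curvature-like array `R` admitting an `SU(2) ⊕ GL(r,ℍ)`
decomposition through the vielbein, the antisymmetric part of the Ricci tensor
`Ric_{XY} = Σ_Z R_{ZXY}{}^Z` is `-Σ_A 𝓒_{XYA}{}^A`; in particular, if `Ric` is symmetric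
then `Σ_A 𝓒_{XYA}{}^A = 0`. -/
theorem stmt5 {r : ℕ} (hr : 1 ≤ r)
    (rho rhoLow : Fin (2*r) → Fin (2*r) → ℂ)
    (f fUp : Fin (4*r) → Fin 2 → Fin (2*r) → ℂ)
    (hviel : IsVielbein rho rhoLow f fUp)
    (R : Fin (4*r) → Fin (4*r) → Fin (4*r) → Fin (4*r) → ℂ)
    (Bc : Fin 3 → Fin (4*r) → Fin (4*r) → ℂ)
    (Cc : Fin (4*r) → Fin (4*r) → Fin (2*r) → Fin (2*r) → ℂ)
    (hanti : ∀ X Y W Z, R X Y W Z = - R Y X W Z)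
    (hbianchi : ∀ X Y W Z, R X Y W Z + R Y W X Z + R W X Y Z = 0)
    (hdecomp : ∀ X Y W Z, R X Y W Z
      = -(∑ a, Bc a X Y * JmatF f fUp a W Z)
        + ∑ A, ∑ B, Cc X Y B A * LmatF f fUp A B W Z) :
    (∀ X Y, ((∑ Z, R Z X Y Z) - (∑ Z, R Z Y X Z)) / 2 = -∑ A, Cc X Y A A) ∧
    ((∀ X Y, (∑ Z, R Z X Y Z) = ∑ Z, R Z Y X Z) →
      ∀ X Y, (∑ A, Cc X Y A A) = 0) := by
  obtain ⟨-, -, -, -, hinv, -, -⟩ := hviel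
  have hJ : ∀ a, ∑ Z, JmatF f fUp a Z Z = 0 := by
    intro a
    unfold JmatF
    rw [← Finset.mul_sum, Finset.sum_comm]
    have h1 : ∀ i : Fin 2, (∑ Z, ∑ j, ∑ A, pauli a i j * f Z i A * fUp Z j A)
        = ∑ j, ∑ A : Fin (2*r), pauli a i j * (if i = j then 1 else 0) := by
      intro i
      rw [Finset.sum_comm]
      refine Finset.sum_congr rfl fun j _ => ?_
      rw [Finset.sum_comm]
      refine Finset.sum_congr rfl fun A _ => ?_
      simp only [mul_assoc]
      rw [← Finset.mul_sum, hinv]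
      simp
    simp only [h1]
    fin_cases a <;> simp [pauli, Fin.sum_univ_two]
  have hL : ∀ A B, ∑ Z, LmatF f fUp A B Z Z = if A = B then 2 else 0 := by
    intro A B
    unfold LmatF
    rw [Finset.sum_comm]
    have h1 : ∀ i : Fin 2, (∑ Z, fUp Z i A * f Z i B) = if A = B then 1 else 0 := by
      intro i
      have := hinv i B i A
      simp only [mul_comm (fUp _ _ _)]
      rw [this]
      simp [eq_comm]
    simp only [h1]
    split_ifs <;> simp
  have htr : ∀ X Y, ∑ Z, R X Y Z Z = 2 * ∑ A, Cc X Y A A := by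
    intro X Y
    simp only [hdecomp X Y]
    rw [Finset.sum_add_distrib, Finset.sum_neg_distrib, Finset.sum_comm]
    simp only [← Finset.mul_sum, hJ]
    rw [Finset.sum_comm]
    have h1 : ∀ A : Fin (2*r), (∑ Z, ∑ B, Cc X Y B A * LmatF f fUp A B Z Z)
        = 2 * Cc X Y A A := by
      intro A
      rw [Finset.sum_comm]
      simp only [← Finset.mul_sum, hL]
      simp [mul_comm]
    simp only [h1, ← Finset.mul_sum]
    simp
  have key : ∀ X Y, (∑ Z, R Z X Y Z) - (∑ Z, R Z Y X Z) = -(2 * ∑ A, Cc X Y A A) := by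
    intro X Y
    rw [← htr, ← Finset.sum_sub_distrib, ← Finset.sum_neg_distrib]
    refine Finset.sum_congr rfl fun Z _ => ?_
    linear_combination hbianchi Z X Y Z - hanti Y Z X Z
  refine ⟨fun X Y => ?_, fun h X Y => ?_⟩
  · rw [key]; ring
  · have := key X Y
    rw [h X Y] at this
    linear_combination (1/2 : ℂ) * this
end
end

section
/- (Uniqueness of the torsionless hypercomplex connection.) Let V be a real vector space with a quaternionic triple (J^1,J^2,J^3). If S : V × V → V is a symmetric bilinear map satisfying S(X, J^a Y) = J^a S(X,Y) for all a ∈ {1,2,3} and all X,Y ∈ V, then S = 0. Consequently, if U is an open subset of a finite-dimensional real vector space E, J : U → End(E)^3 is a smooth field of quaternionic triples, and Γ, Γ' are two torsionless connection coefficient fields on U with (∇_X J^a)_p = 0 and (∇'_X J^a)_p = 0 for all a, p, X, then Γ = Γ'. -/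
noncomputable section

/-- A quaternionic triple on a real vector space `V`:
`J^a ∘ J^b = -δ^{ab} id_V + Σ_c ε^{abc} J^c`. -/
def IsQuatTriple {V : Type*} [AddCommGroup V] [Module ℝ V]
    (J : Fin 3 → Module.End ℝ V) : Prop :=
  ∀ a b, J a * J b = -(if a = b then (1 : Module.End ℝ V) else 0) + ∑ c, eps3 a b c • J c

/-- A quaternionic triple of continuous linear endomorphisms:
`J^a ∘ J^b = -δ^{ab} id + Σ_c ε^{abc} J^c`. -/
def IsQuatTripleCLM {E : Type*} [NormedAddCommGroup E] [NormedSpace ℝ E]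
    (J : Fin 3 → E →L[ℝ] E) : Prop :=
  ∀ a b, (J a).comp (J b)
    = -(if a = b then (1 : E →L[ℝ] E) else 0) + ∑ c, eps3 a b c • J c

theorem quat_core {V : Type*} [AddCommGroup V] [Module ℝ V]
    (J : Fin 3 → Module.End ℝ V) (hJ : IsQuatTriple J)
    (S : V →ₗ[ℝ] V →ₗ[ℝ] V) (hs : ∀ X Y, S X Y = S Y X)
    (hc : ∀ (a : Fin 3) (X Y : V), S X (J a Y) = J a (S X Y)) : S = 0 := by
  ext X Y
  have h01 := LinearMap.congr_fun (hJ 0 1) (S X Y)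
  have h10 := LinearMap.congr_fun (hJ 1 0) (S X Y)
  have h22 := LinearMap.congr_fun (hJ 2 2) (S X Y)
  simp [Fin.sum_univ_three, eps3] at h01 h10 h22
  have hl : ∀ (a : Fin 3) (X Y : V), S (J a X) Y = J a (S X Y) := by
    intro a X Y
    rw [hs, hc, hs]
  have e : J 0 (J 1 (S X Y)) = J 1 (J 0 (S X Y)) := by
    rw [← hc 1, ← hl 0, hc 1, hl 0]
  rw [h01, h10] at e
  norm_num at e
  have e2 : J 2 (S X Y) = 0 := by
    have h2 : (2 : ℝ) • J 2 (S X Y) = 0 := by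
      rw [two_smul]
      exact add_eq_zero_iff_eq_neg.mpr e
    exact (smul_eq_zero.mp h2).resolve_left two_ne_zero
  rw [e2, map_zero] at h22
  simpa using h22.symm

/-- (i) a symmetric bilinear map commuting with a quaternionic triple in its
second slot vanishes; consequently (ii) a torsionless connection making a smooth field of
quaternionic triples covariantly constant is unique. -/
theorem stmt6 :
    (∀ (V : Type) [AddCommGroup V] [Module ℝ V]
       (J : Fin 3 → Module.End ℝ V), IsQuatTriple J →
       ∀ S : V →ₗ[ℝ] V →ₗ[ℝ] V,
         (∀ X Y, S X Y = S Y X) →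
         (∀ (a : Fin 3) (X Y : V), S X (J a Y) = J a (S X Y)) →
         S = 0) ∧
    (∀ (E : Type) [NormedAddCommGroup E] [NormedSpace ℝ E] [FiniteDimensional ℝ E]
       (U : Set E), IsOpen U →
       ∀ (J : E → Fin 3 → E →L[ℝ] E) (Γ Γ' : E → E →L[ℝ] E →L[ℝ] E),
         ContDiffOn ℝ (⊤ : ℕ∞) J U →
         ContDiffOn ℝ (⊤ : ℕ∞) Γ U → ContDiffOn ℝ (⊤ : ℕ∞) Γ' U →
         (∀ p ∈ U, IsQuatTripleCLM (J p)) →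
         (∀ p ∈ U, ∀ X Y : E, Γ p X Y = Γ p Y X) →
         (∀ p ∈ U, ∀ X Y : E, Γ' p X Y = Γ' p Y X) →
         (∀ p ∈ U, ∀ (a : Fin 3) (X : E),
           fderiv ℝ (fun q => J q a) p X
             + (Γ p X).comp (J p a) - (J p a).comp (Γ p X) = 0) →
         (∀ p ∈ U, ∀ (a : Fin 3) (X : E),
           fderiv ℝ (fun q => J q a) p X
             + (Γ' p X).comp (J p a) - (J p a).comp (Γ' p X) = 0) →
         ∀ p ∈ U, Γ p = Γ' p) := by
  refine ⟨fun V _ _ J hJ S hs hc => quat_core J hJ S hs hc, ?_⟩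
  intro E _ _ _ U _ J Γ Γ' _ _ _ hJ hs hs' hn hn' p hp
  have hq : IsQuatTriple (fun a => (J p a : E →ₗ[ℝ] E)) := by
    intro a b
    ext x
    have := congrArg (fun f : E →L[ℝ] E => f x) (hJ p hp a b)
    by_cases hab : a = b <;> simpa [hab, Fin.sum_univ_three] using this
  let S : E →ₗ[ℝ] E →ₗ[ℝ] E := LinearMap.mk₂ ℝ (fun X Y => Γ p X Y - Γ' p X Y)
    (by intros; simp; abel) (by intros; simp [smul_sub])
    (by intros; simp; abel) (by intros; simp [smul_sub])
  have hS : S = 0 := by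
    refine quat_core _ hq S ?_ ?_
    · intro X Y
      simp [S, hs p hp X Y, hs' p hp X Y]
    · intro a X Y
      have h1 := congrArg (fun f : E →L[ℝ] E => f Y) (hn p hp a X)
      have h2 := congrArg (fun f : E →L[ℝ] E => f Y) (hn' p hp a X)
      simp at h1 h2
      simp only [S, LinearMap.mk₂_apply, ContinuousLinearMap.coe_coe, map_sub]
      have h3 := h1.trans h2.symm
      rw [← sub_eq_zero] at h3 ⊢
      rw [← h3]
      abel
  ext X Y
  have := LinearMap.congr_fun (LinearMap.congr_fun hS X) Y
  simpa [S, sub_eq_zero] using this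
end
end

section
/- (ξ-transformations of quaternionic connections.) Let U ⊆ E be open, let (J^1,J^2,J^3) be a smooth field of quaternionic triples on U, and suppose the torsionless connection coefficients Γ together with the triplet of smooth 1-form fields ω^a satisfy the quaternionic condition. Then for every smooth 1-form field ξ : U → E^*, the connection coefficients Γ'_p(X,Y) := Γ_p(X,Y) + S^{ξ_p}(X,Y) (with S^{ξ_p} built from ξ_p and the quaternionic triple at p) are again torsionless and, together with the triplet ω'^a_p := ω^a_p - ξ_p ∘ J^a_p, satisfy the quaternionic condition. -/
noncomputable section

/-- `S^ξ(X,Y) = ξ(X)Y + ξ(Y)X - Σ_a ξ(J^a X) J^a Y - Σ_a ξ(J^a Y) J^a X`. -/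
def SxiCLM {E : Type*} [NormedAddCommGroup E] [NormedSpace ℝ E]
    (J : Fin 3 → E →L[ℝ] E) (ξ : E →L[ℝ] ℝ) (X Y : E) : E :=
  ξ X • Y + ξ Y • X - (∑ a, ξ (J a X) • J a Y) - ∑ a, ξ (J a Y) • J a X

theorem sxi_comm_aux {E : Type*} [NormedAddCommGroup E] [NormedSpace ℝ E]
    (J : Fin 3 → E →L[ℝ] E) (ξ : E →L[ℝ] ℝ) (h : IsQuatTripleCLM J) (a : Fin 3) (X Y : E) :
    SxiCLM J ξ X (J a Y) - J a (SxiCLM J ξ X Y)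
      = (2 : ℝ) • ∑ b, ∑ c, (eps3 a b c * ξ (J b X)) • J c Y := by
  have h' : ∀ a b Z, J a (J b Z) = -(if a = b then Z else 0) + ∑ c, eps3 a b c • J c Z := by
    intro a b Z
    have := congrArg (fun L : E →L[ℝ] E => L Z) (h a b)
    by_cases hab : a = b
    · simpa [hab, ContinuousLinearMap.sum_apply] using this
    · simpa [hab, ContinuousLinearMap.sum_apply] using this
  have h00 : ∀ Z, J 0 (J 0 Z) = -Z := fun Z => by rw [h']; simp [Fin.sum_univ_three, eps3]
  have h11 : ∀ Z, J 1 (J 1 Z) = -Z := fun Z => by rw [h']; simp [Fin.sum_univ_three, eps3]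
  have h22 : ∀ Z, J 2 (J 2 Z) = -Z := fun Z => by rw [h']; simp [Fin.sum_univ_three, eps3]
  have h01 : ∀ Z, J 0 (J 1 Z) = J 2 Z := fun Z => by
    rw [h', if_neg (by decide)]; norm_num [Fin.sum_univ_three, eps3]
  have h12 : ∀ Z, J 1 (J 2 Z) = J 0 Z := fun Z => by
    rw [h', if_neg (by decide)]; norm_num [Fin.sum_univ_three, eps3]
  have h20 : ∀ Z, J 2 (J 0 Z) = J 1 Z := fun Z => by
    rw [h', if_neg (by decide)]; norm_num [Fin.sum_univ_three, eps3]
  have h10 : ∀ Z, J 1 (J 0 Z) = -J 2 Z := fun Z => by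
    rw [h', if_neg (by decide)]; norm_num [Fin.sum_univ_three, eps3]
  have h21 : ∀ Z, J 2 (J 1 Z) = -J 0 Z := fun Z => by
    rw [h', if_neg (by decide)]; norm_num [Fin.sum_univ_three, eps3]
  have h02 : ∀ Z, J 0 (J 2 Z) = -J 1 Z := fun Z => by
    rw [h', if_neg (by decide)]; norm_num [Fin.sum_univ_three, eps3]
  fin_cases a <;>
  · simp only [SxiCLM, Fin.sum_univ_three, Fin.zero_eta, Fin.mk_one, Fin.reduceFinMk, map_add,
      map_sub, map_smul, h00, h11, h22, h01, h12, h20, h10, h21, h02, map_neg, eps3,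
      Fin.val_zero, Fin.val_one, Fin.val_two]
    push_cast
    module

/-- ξ-transformations.  If `(Γ, ω)` satisfies the quaternionic condition for
a smooth field of quaternionic triples, then for any 1-form field `ξ` the shifted
connection `Γ' = Γ + S^ξ` is torsionless and satisfies the quaternionic condition with
`ω'^a = ω^a - ξ ∘ J^a`. -/
theorem stmt7 {E : Type*} [NormedAddCommGroup E] [NormedSpace ℝ E] [FiniteDimensional ℝ E]
    (U : Set E) (hU : IsOpen U)
    (J : E → Fin 3 → E →L[ℝ] E) (Γ : E → E →L[ℝ] E →L[ℝ] E)
    (ω : E → Fin 3 → E →L[ℝ] ℝ) (ξ : E → E →L[ℝ] ℝ)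
    (hJsm : ContDiffOn ℝ (⊤ : ℕ∞) J U) (hΓsm : ContDiffOn ℝ (⊤ : ℕ∞) Γ U)
    (hωsm : ContDiffOn ℝ (⊤ : ℕ∞) ω U) (hξsm : ContDiffOn ℝ (⊤ : ℕ∞) ξ U)
    (hquat : ∀ p ∈ U, IsQuatTripleCLM (J p))
    (htor : ∀ p ∈ U, ∀ X Y : E, Γ p X Y = Γ p Y X)
    (hqc : ∀ p ∈ U, ∀ (a : Fin 3) (X : E),
      fderiv ℝ (fun q => J q a) p X
        + (Γ p X).comp (J p a) - (J p a).comp (Γ p X)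
        + (2 : ℝ) • ∑ b, ∑ c, (eps3 a b c * ω p b X) • J p c = 0) :
    (∀ p ∈ U, ∀ X Y : E,
      Γ p X Y + SxiCLM (J p) (ξ p) X Y = Γ p Y X + SxiCLM (J p) (ξ p) Y X) ∧
    (∀ p ∈ U, ∀ (a : Fin 3) (X Y : E),
      fderiv ℝ (fun q => J q a) p X Y
        + (Γ p X (J p a Y) + SxiCLM (J p) (ξ p) X (J p a Y))
        - J p a (Γ p X Y + SxiCLM (J p) (ξ p) X Y)
        + (2 : ℝ) • ∑ b, ∑ c,
            (eps3 a b c * (ω p b X - ξ p (J p b X))) • J p c Y = 0) := by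
  refine ⟨fun p hp X Y => ?_, fun p hp a X Y => ?_⟩
  · rw [htor p hp X Y]
    simp only [SxiCLM]
    abel
  · have h1 := congrArg (fun L : E →L[ℝ] E => L Y) (hqc p hp a X)
    have h2 := sxi_comm_aux (J p) (ξ p) (hquat p hp) a X Y
    simp only [ContinuousLinearMap.add_apply, ContinuousLinearMap.sub_apply,
      ContinuousLinearMap.comp_apply, ContinuousLinearMap.smul_apply,
      ContinuousLinearMap.sum_apply, ContinuousLinearMap.zero_apply] at h1
    simp only [mul_sub, sub_smul, Finset.sum_sub_distrib, smul_sub, map_add]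
    rw [← h2, ← h1]
    abel
end
end

section
/- Let V be a real vector space with a quaternionic triple and let ξ ∈ V^*. Then for all a ∈ {1,2,3} and all X,Y ∈ V, S^ξ(X, J^a Y) - J^a S^ξ(X,Y) = 2 Σ_{b,c} ε^{abc} ξ(J^b X) J^c Y. In particular, for each fixed X the commutator of the endomorphism S^ξ(X,·) with each J^a lies in the real span of {J^1,J^2,J^3}. -/
noncomputable section

/-- For a linear form `ξ`, the endomorphism `S^ξ(X, ·)`:
`S^ξ(X,Y) = ξ(X)Y + ξ(Y)X - Σ_a ξ(J^a X) J^a Y - Σ_a ξ(J^a Y) J^a X`. -/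
def SxiEnd {V : Type*} [AddCommGroup V] [Module ℝ V]
    (J : Fin 3 → Module.End ℝ V) (ξ : V →ₗ[ℝ] ℝ) (X : V) : Module.End ℝ V :=
  ξ X • (1 : Module.End ℝ V) + ξ.smulRight X
    - (∑ a, ξ (J a X) • J a)
    - ∑ a, (ξ ∘ₗ (J a : V →ₗ[ℝ] V)).smulRight (J a X)

/-- `S^ξ(X, J^a Y) - J^a S^ξ(X,Y) = 2 Σ_{b,c} ε^{abc} ξ(J^b X) J^c Y`; in
particular the commutator of `S^ξ(X,·)` with each `J^a` lies in `span_ℝ {J^1,J^2,J^3}`. -/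
theorem stmt8 {V : Type*} [AddCommGroup V] [Module ℝ V]
    (J : Fin 3 → Module.End ℝ V) (hJ : IsQuatTriple J) (ξ : V →ₗ[ℝ] ℝ) :
    (∀ (a : Fin 3) (X Y : V),
      SxiEnd J ξ X (J a Y) - J a (SxiEnd J ξ X Y)
        = (2 : ℝ) • ∑ b, ∑ c, (eps3 a b c * ξ (J b X)) • J c Y) ∧
    (∀ (X : V) (a : Fin 3),
      SxiEnd J ξ X * J a - J a * SxiEnd J ξ X ∈ Submodule.span ℝ (Set.range J)) := by
  have h : ∀ (a b : Fin 3) (Y : V), J a (J b Y)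
      = -(if a = b then Y else 0) + ∑ c, eps3 a b c • J c Y := by
    intro a b Y
    have := congrArg (fun f : Module.End ℝ V => f Y) (hJ a b)
    simp only [Module.End.mul_apply] at this
    rw [this]
    split_ifs <;> simp [LinearMap.sum_apply]
  have key : ∀ (a : Fin 3) (X Y : V),
      SxiEnd J ξ X (J a Y) - J a (SxiEnd J ξ X Y)
        = (2 : ℝ) • ∑ b, ∑ c, (eps3 a b c * ξ (J b X)) • J c Y := by
    intro a X Y
    fin_cases a <;>
    · simp [SxiEnd, Fin.sum_univ_three, h, eps3]
      norm_num
      module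
  refine ⟨key, fun X a => ?_⟩
  have e : SxiEnd J ξ X * J a - J a * SxiEnd J ξ X
      = (2 : ℝ) • ∑ b, ∑ c, (eps3 a b c * ξ (J b X)) • J c := by
    ext Y
    simpa [LinearMap.sum_apply] using key a X Y
  rw [e]
  exact Submodule.smul_mem _ _ (Submodule.sum_mem _ fun b _ => Submodule.sum_mem _ fun c _ =>
    Submodule.smul_mem _ _ (Submodule.subset_span ⟨c, rfl⟩))
end
end

section
/- (SU(2) ⊕ GL(r,ℍ) decomposition of endomorphisms.) Let V be a real vector space of dimension 4r (r ≥ 1) with a quaternionic triple (J^1,J^2,J^3). If T ∈ End(V) satisfies T ∘ J^a - J^a ∘ T ∈ span_ℝ{J^1,J^2,J^3} for each a ∈ {1,2,3}, then there exist unique real numbers p_1,p_2,p_3 and a unique T_0 ∈ End(V) commuting with J^1, J^2 and J^3 such that T = Σ_a p_a J^a + T_0; moreover p_a = -tr(J^a ∘ T)/(4r). -/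
noncomputable section

theorem quat_rels {V : Type*} [AddCommGroup V] [Module ℝ V]
    (J : Fin 3 → Module.End ℝ V) (hJ : IsQuatTriple J) :
    (J 0 * J 0 = -1 ∧ J 1 * J 1 = -1 ∧ J 2 * J 2 = -1) ∧
    (J 0 * J 1 = J 2 ∧ J 1 * J 2 = J 0 ∧ J 2 * J 0 = J 1) ∧
    (J 1 * J 0 = -J 2 ∧ J 2 * J 1 = -J 0 ∧ J 0 * J 2 = -J 1) := by
  refine ⟨⟨?_, ?_, ?_⟩, ⟨?_, ?_, ?_⟩, ⟨?_, ?_, ?_⟩⟩ <;> rw [hJ] <;>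
    simp [Fin.sum_univ_three, eps3] <;> norm_num

theorem trace_comm_zero {V : Type*} [AddCommGroup V] [Module ℝ V] [FiniteDimensional ℝ V]
    (A B C S : Module.End ℝ V) (h1 : B * C = A) (h2 : C * B = -A) (hS : S * B = B * S) :
    LinearMap.trace ℝ V (A * S) = 0 := by
  have h : LinearMap.trace ℝ V (B * (C * S)) = LinearMap.trace ℝ V ((C * S) * B) :=
    LinearMap.trace_mul_comm ℝ _ _
  rw [mul_assoc, hS, ← mul_assoc, ← mul_assoc, h1, h2, neg_mul, map_neg] at h
  linarith

theorem coeff_trace {V : Type*} [AddCommGroup V] [Module ℝ V] [FiniteDimensional ℝ V]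
    (r : ℕ) (hr : 1 ≤ r) (hdim : Module.finrank ℝ V = 4 * r)
    (J : Fin 3 → Module.End ℝ V) (hJ : IsQuatTriple J)
    (T : Module.End ℝ V) (q : Fin 3 → ℝ) (S : Module.End ℝ V)
    (hS : ∀ a, Commute S (J a)) (hT : T = (∑ a, q a • J a) + S) (a : Fin 3) :
    q a = -(LinearMap.trace ℝ V (J a * T)) / (4 * (r : ℝ)) := by
  obtain ⟨⟨h00, h11, h22⟩, ⟨h01, h12, h20⟩, ⟨h10, h21, h02⟩⟩ := quat_rels J hJ
  have hr' : (0 : ℝ) < r := by exact_mod_cast hr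
  have t : ∀ S : Module.End ℝ V, (∀ a, Commute S (J a)) →
      ∀ a, LinearMap.trace ℝ V (J a * S) = 0 := by
    intro S hS a
    fin_cases a
    · exact trace_comm_zero _ _ _ S h12 h21 (hS 1)
    · exact trace_comm_zero _ _ _ S h20 h02 (hS 2)
    · exact trace_comm_zero _ _ _ S h01 h10 (hS 0)
  have t1 : ∀ a, LinearMap.trace ℝ V (J a) = 0 := by
    intro a
    simpa using t 1 (fun a => Commute.one_left _) a
  have t2 := t S hS
  have tone : LinearMap.trace ℝ V 1 = 4 * (r : ℝ) := by
    rw [LinearMap.trace_one, hdim]; push_cast; ring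
  rw [eq_div_iff (by positivity), hT]
  fin_cases a <;>
    simp [Fin.sum_univ_three, mul_add, h00, h11, h22, h01, h12, h20, h10, h21, h02, t1, t2, tone]

theorem exists_decomp {V : Type*} [AddCommGroup V] [Module ℝ V]
    (J : Fin 3 → Module.End ℝ V) (hJ : IsQuatTriple J)
    (T : Module.End ℝ V)
    (hT : ∀ a, T * J a - J a * T ∈ Submodule.span ℝ (Set.range J)) :
    ∃ (p : Fin 3 → ℝ) (T₀ : Module.End ℝ V),
      (∀ a, Commute T₀ (J a)) ∧ T = (∑ a, p a • J a) + T₀ := by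
  obtain ⟨⟨h00, h11, h22⟩, ⟨h01, h12, h20⟩, ⟨h10, h21, h02⟩⟩ := quat_rels J hJ
  have g00 : ∀ x, J 0 * (J 0 * x) = -x := fun x => by rw [← mul_assoc, h00, neg_one_mul]
  have g11 : ∀ x, J 1 * (J 1 * x) = -x := fun x => by rw [← mul_assoc, h11, neg_one_mul]
  have g22 : ∀ x, J 2 * (J 2 * x) = -x := fun x => by rw [← mul_assoc, h22, neg_one_mul]
  have g01 : ∀ x, J 0 * (J 1 * x) = J 2 * x := fun x => by rw [← mul_assoc, h01]
  have g12 : ∀ x, J 1 * (J 2 * x) = J 0 * x := fun x => by rw [← mul_assoc, h12]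
  have g20 : ∀ x, J 2 * (J 0 * x) = J 1 * x := fun x => by rw [← mul_assoc, h20]
  have g10 : ∀ x, J 1 * (J 0 * x) = -(J 2 * x) := fun x => by rw [← mul_assoc, h10, neg_mul]
  have g21 : ∀ x, J 2 * (J 1 * x) = -(J 0 * x) := fun x => by rw [← mul_assoc, h21, neg_mul]
  have g02 : ∀ x, J 0 * (J 2 * x) = -(J 1 * x) := fun x => by rw [← mul_assoc, h02, neg_mul]
  have hc : ∀ a, ∃ c : Fin 3 → ℝ, ∑ b, c b • J b = T * J a - J a * T := fun a =>
    (Submodule.mem_span_range_iff_exists_fun ℝ).1 (hT a)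
  choose M hM using hc
  -- the averaged endomorphism commutes with the triple
  let S : Module.End ℝ V := T - J 0 * (T * J 0) - J 1 * (T * J 1) - J 2 * (T * J 2)
  have hS : ∀ a, Commute S (J a) := by
    intro a
    change S * J a = J a * S
    fin_cases a <;>
      simp [S, mul_sub, sub_mul, mul_assoc, h00, h11, h22, h01, h12, h20, h10, h21, h02,
        g00, g11, g22, g01, g12, g20, g10, g21, g02] <;> abel
  have e0 := congrArg (J 0 * ·) (hM 0)
  have e1 := congrArg (J 1 * ·) (hM 1)
  have e2 := congrArg (J 2 * ·) (hM 2)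
  simp [Fin.sum_univ_three, mul_add, mul_sub, h00, h11, h22, h01, h12, h20, h10, h21, h02,
    g00, g11, g22] at e0 e1 e2
  refine ⟨![(1/4 : ℝ) * (M 1 2 - M 2 1), (1/4 : ℝ) * (M 2 0 - M 0 2),
    (1/4 : ℝ) * (M 0 1 - M 1 0)],
    (1/4 : ℝ) • S - ((1/4 : ℝ) * (M 0 0 + M 1 1 + M 2 2)) • 1, ?_, ?_⟩
  · intro a
    exact ((hS a).smul_left _).sub_left ((Commute.one_left _).smul_left _)
  · simp [Fin.sum_univ_three, S]
    linear_combination (norm := module) (-1/4 : ℝ) • e0 + (-1/4 : ℝ) • e1 + (-1/4 : ℝ) • e2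

/-- `su(2) ⊕ gl(r,ℍ)` decomposition of an endomorphism whose commutators
with a quaternionic triple lie in `span_ℝ {J^1,J^2,J^3}`: `T = Σ_a p_a J^a + T₀` with `T₀`
commuting with all `J^a`, uniquely, and `p_a = -tr(J^a T)/(4r)`. -/
theorem stmt9 {V : Type*} [AddCommGroup V] [Module ℝ V] [FiniteDimensional ℝ V]
    (r : ℕ) (hr : 1 ≤ r) (hdim : Module.finrank ℝ V = 4 * r)
    (J : Fin 3 → Module.End ℝ V) (hJ : IsQuatTriple J)
    (T : Module.End ℝ V)
    (hT : ∀ a, T * J a - J a * T ∈ Submodule.span ℝ (Set.range J)) :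
    ∃ (p : Fin 3 → ℝ) (T₀ : Module.End ℝ V),
      (∀ a, Commute T₀ (J a)) ∧
      T = (∑ a, p a • J a) + T₀ ∧
      (∀ a, p a = -(LinearMap.trace ℝ V (J a * T)) / (4 * (r : ℝ))) ∧
      (∀ (q : Fin 3 → ℝ) (T₁ : Module.End ℝ V),
        (∀ a, Commute T₁ (J a)) → T = (∑ a, q a • J a) + T₁ → q = p ∧ T₁ = T₀) := by
  obtain ⟨p, T₀, h1, h2⟩ := exists_decomp J hJ T hT
  have hp := coeff_trace r hr hdim J hJ T p T₀ h1 h2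
  refine ⟨p, T₀, h1, h2, hp, ?_⟩
  intro q T₁ g1 g2
  have hq := coeff_trace r hr hdim J hJ T q T₁ g1 g2
  have hqp : q = p := funext fun a => (hq a).trans (hp a).symm
  refine ⟨hqp, ?_⟩
  subst hqp
  exact add_left_cancel (g2.symm.trans h2)
end
end

section
/- (Shift of the moment map under ξ-transformations.) Let V be a real vector space with a quaternionic triple, let ξ ∈ V^* and k ∈ V. Then the endomorphism T of V defined by T(X) = S^ξ(X, k) + Σ_a ξ(J^a k) J^a X commutes with each J^b (b = 1,2,3); equivalently, in the decomposition of X ↦ S^ξ(X,k) into a span{J^1,J^2,J^3}-part plus a part commuting with all J^a, the span{J}-part equals -Σ_a ξ(J^a k) J^a. -/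
noncomputable section

/-- the map `T : X ↦ S^ξ(X,k) + Σ_a ξ(J^a k) J^a X` is linear and commutes
with each `J^b`. -/
theorem stmt10 {V : Type*} [AddCommGroup V] [Module ℝ V]
    (J : Fin 3 → Module.End ℝ V) (hJ : IsQuatTriple J)
    (ξ : V →ₗ[ℝ] ℝ) (k : V) :
    IsLinearMap ℝ (fun X => SxiEnd J ξ X k + ∑ a, ξ (J a k) • J a X) ∧
    (∀ (b : Fin 3) (X : V),
      (SxiEnd J ξ (J b X) k + ∑ a, ξ (J a k) • J a (J b X))
        = J b (SxiEnd J ξ X k + ∑ a, ξ (J a k) • J a X)) := by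
  have hT : ∀ X, SxiEnd J ξ X k + ∑ a, ξ (J a k) • J a X
      = ξ X • k + ξ k • X - ∑ a, ξ (J a X) • J a k := by
    intro X
    simp [SxiEnd, LinearMap.sum_apply]
  have h : ∀ a b X, J a (J b X) = -(if a = b then X else 0) + ∑ c, eps3 a b c • J c X := by
    intro a b X
    have := congrArg (fun f : Module.End ℝ V => f X) (hJ a b)
    simp only [Module.End.mul_apply, LinearMap.add_apply, LinearMap.neg_apply,
      LinearMap.sum_apply, LinearMap.smul_apply] at this
    rw [this]
    split_ifs <;> simp
  simp only [hT]
  refine ⟨⟨?_, ?_⟩, ?_⟩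
  · intro X Y
    simp only [map_add, add_smul, smul_add, Finset.sum_add_distrib]
    abel
  · intro c X
    simp only [map_smul, smul_eq_mul, smul_add, smul_sub, Finset.smul_sum, smul_smul, mul_comm]
  · intro b X
    simp only [map_add, map_sub, map_sum, map_smul, h, Fin.sum_univ_three]
    fin_cases b <;> simp [eps3] <;> norm_num <;> module
end
end

section
/- (The conformal hypercomplex extension is almost hypercomplex.) With the data and definitions of the hat construction, the endomorphisms Ĵ^1, Ĵ^2, Ĵ^3 of V̂ = ℝ ⊕ ℝ^3 ⊕ W form a quaternionic triple on V̂: Ĵ^a ∘ Ĵ^b = -δ^{ab} id_{V̂} + Σ_c ε^{abc} Ĵ^c for all a,b ∈ {1,2,3}. -/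
noncomputable section

/-- The hat construction: the endomorphisms `Ĵ^a` of `V̂ = ℝ ⊕ ℝ^3 ⊕ W`, given as plain
functions; `k β a` is `k^β{}_a` and `m a β` is `m^a{}_β`. -/
def JhatFun {W : Type*} [AddCommGroup W] [Module ℝ W]
    (J : Fin 3 → Module.End ℝ W) (z0 : ℝ) (k m : Fin 3 → Fin 3 → ℝ)
    (A : Fin 3 → W →ₗ[ℝ] ℝ) (a : Fin 3) :
    ℝ × (Fin 3 → ℝ) × W → ℝ × (Fin 3 → ℝ) × W :=
  fun v =>
    ( -z0 * ((∑ α, m a α * v.2.1 α) + A a v.2.2),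
      fun β => (1/z0) * k β a * v.1
        + (∑ α, (∑ b, ∑ c, eps3 a b c * m b α * k β c) * v.2.1 α)
        + ((∑ b, ∑ c, eps3 a b c * A b v.2.2 * k β c)
            - ∑ b, A b (J a v.2.2) * k β b),
      J a v.2.2 )

/-- The standard (left multiplication) model of the hat construction. -/
def SFun {W : Type*} [AddCommGroup W] [Module ℝ W]
    (J : Fin 3 → Module.End ℝ W) (a : Fin 3) :
    ℝ × (Fin 3 → ℝ) × W → ℝ × (Fin 3 → ℝ) × W :=
  fun u => (-u.2.1 a, fun c => (if a = c then u.1 else 0) + ∑ b, eps3 a b c * u.2.1 b, J a u.2.2)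

/-- The change of coordinates from the standard model. -/
def PsiFun {W : Type*} [AddCommGroup W] [Module ℝ W]
    (z0 : ℝ) (k : Fin 3 → Fin 3 → ℝ) (A : Fin 3 → W →ₗ[ℝ] ℝ) :
    ℝ × (Fin 3 → ℝ) × W →ₗ[ℝ] ℝ × (Fin 3 → ℝ) × W where
  toFun u := (z0 * u.1, fun β => ∑ c, k β c * (u.2.1 c - A c u.2.2), u.2.2)
  map_add' u v := by
    ext1
    · simp; ring
    ext1
    · funext β; simp [Fin.sum_univ_three]; ring
    · simp
  map_smul' r u := by
    ext1
    · simp; ring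
    ext1
    · funext β; simp [Fin.sum_univ_three]; ring
    · simp

set_option maxHeartbeats 2000000 in
theorem SFun_quat {W : Type*} [AddCommGroup W] [Module ℝ W]
    (J : Fin 3 → Module.End ℝ W) (hJ : IsQuatTriple J) (a b : Fin 3)
    (u : ℝ × (Fin 3 → ℝ) × W) :
    SFun J a (SFun J b u) = -(if a = b then (1 : ℝ) else 0) • u
          + ∑ c, eps3 a b c • SFun J c u := by
  have e : ∀ h : 2 < 3, (⟨2, h⟩ : Fin 3) = 2 := fun _ => rfl
  have h02 : ¬ ((0 : Fin 3) = 2) := by decide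
  have h20 : ¬ ((2 : Fin 3) = 0) := by decide
  have h12 : ¬ ((1 : Fin 3) = 2) := by decide
  have h21 : ¬ ((2 : Fin 3) = 1) := by decide
  ext1
  · fin_cases a <;> fin_cases b <;>
      norm_num [SFun, eps3, Fin.sum_univ_three, e, h02, h20, h12, h21] <;> ring
  ext1
  · funext d
    fin_cases a <;> fin_cases b <;> fin_cases d <;>
      norm_num [SFun, eps3, Fin.sum_univ_three, e, h02, h20, h12, h21] <;> ring
  · have h := congrArg (fun f => f u.2.2) (hJ a b)
    simp only [Module.End.mul_apply] at h
    simp only [SFun, h]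
    by_cases hab : a = b <;> simp [hab, Fin.sum_univ_three]

theorem Jhat_Psi {W : Type*} [AddCommGroup W] [Module ℝ W]
    (J : Fin 3 → Module.End ℝ W)
    (z0 : ℝ) (hz0 : z0 ≠ 0) (k m : Fin 3 → Fin 3 → ℝ)
    (hmk : ∀ a b, (∑ β, m a β * k β b) = if a = b then 1 else 0)
    (A : Fin 3 → W →ₗ[ℝ] ℝ) (a : Fin 3) (u : ℝ × (Fin 3 → ℝ) × W) :
    JhatFun J z0 k m A a (PsiFun z0 k A u) = PsiFun z0 k A (SFun J a u) := by
  have hy : ∀ b, ∑ α, m b α * (PsiFun z0 k A u).2.1 α = u.2.1 b - A b u.2.2 := by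
    intro b
    have : ∑ α, m b α * (PsiFun z0 k A u).2.1 α
        = ∑ c, (∑ α, m b α * k α c) * (u.2.1 c - A c u.2.2) := by
      simp only [PsiFun, LinearMap.coe_mk, AddHom.coe_mk, Fin.sum_univ_three]; ring
    rw [this]; simp [hmk]
  have h1 : (PsiFun z0 k A u).1 = z0 * u.1 := rfl
  have h2 : (PsiFun z0 k A u).2.2 = u.2.2 := rfl
  generalize PsiFun z0 k A u = v at *
  ext1
  · simp [JhatFun, PsiFun, SFun, hy, h2]
  ext1
  · funext β
    have h3 : (∑ α, (∑ b, ∑ c, eps3 a b c * m b α * k β c) * v.2.1 α)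
        = ∑ b, ∑ c, eps3 a b c * (u.2.1 b - A b u.2.2) * k β c := by
      simp only [← hy, Fin.sum_univ_three]; ring
    have h4 : (1 / z0) * k β a * v.1 = k β a * u.1 := by rw [h1]; field_simp
    have h5 : k β a * u.1 = ∑ c, k β c * (if a = c then u.1 else 0) := by simp
    simp only [JhatFun, PsiFun, SFun, h3, h4, h2, LinearMap.coe_mk, AddHom.coe_mk]
    rw [h5]
    simp only [Fin.sum_univ_three]; ring
  · simp [JhatFun, PsiFun, SFun, h2]

theorem Psi_surj {W : Type*} [AddCommGroup W] [Module ℝ W]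
    (z0 : ℝ) (hz0 : z0 ≠ 0) (k m : Fin 3 → Fin 3 → ℝ)
    (hkm : ∀ α β, (∑ a, k α a * m a β) = if α = β then 1 else 0)
    (A : Fin 3 → W →ₗ[ℝ] ℝ) (v : ℝ × (Fin 3 → ℝ) × W) :
    ∃ u, PsiFun z0 k A u = v := by
  refine ⟨(v.1 / z0, fun c => (∑ α, m c α * v.2.1 α) + A c v.2.2, v.2.2), ?_⟩
  ext1
  · simp only [PsiFun, LinearMap.coe_mk, AddHom.coe_mk]; field_simp
  ext1
  · funext β
    have : v.2.1 β = ∑ α, (∑ a, k β a * m a α) * v.2.1 α := by simp [hkm]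
    rw [this]
    simp only [PsiFun, LinearMap.coe_mk, AddHom.coe_mk, Fin.sum_univ_three]; ring
  · rfl

/-- the hat construction produces linear endomorphisms `Ĵ^a` of
`V̂ = ℝ ⊕ ℝ^3 ⊕ W` satisfying the quaternion algebra, i.e. a quaternionic triple. -/
theorem stmt11 {W : Type*} [AddCommGroup W] [Module ℝ W] [FiniteDimensional ℝ W]
    (J : Fin 3 → Module.End ℝ W) (hJ : IsQuatTriple J)
    (z0 : ℝ) (hz0 : z0 ≠ 0) (k m : Fin 3 → Fin 3 → ℝ)
    (hmk : ∀ a b, (∑ β, m a β * k β b) = if a = b then 1 else 0)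
    (hkm : ∀ α β, (∑ a, k α a * m a β) = if α = β then 1 else 0)
    (A : Fin 3 → W →ₗ[ℝ] ℝ) :
    (∀ a, IsLinearMap ℝ (JhatFun J z0 k m A a)) ∧
    (∀ (a b : Fin 3) (v : ℝ × (Fin 3 → ℝ) × W),
      JhatFun J z0 k m A a (JhatFun J z0 k m A b v)
        = -(if a = b then (1 : ℝ) else 0) • v
          + ∑ c, eps3 a b c • JhatFun J z0 k m A c v) := by
  refine ⟨fun a => ⟨fun u v => ?_, fun r u => ?_⟩, fun a b v => ?_⟩
  · ext1
    · simp [JhatFun, Fin.sum_univ_three]; ring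
    ext1
    · funext β; simp [JhatFun, Fin.sum_univ_three]; ring
    · simp [JhatFun]
  · ext1
    · simp [JhatFun, Fin.sum_univ_three]; ring
    ext1
    · funext β; simp [JhatFun, Fin.sum_univ_three]; ring
    · simp [JhatFun]
  · obtain ⟨u, rfl⟩ := Psi_surj z0 hz0 k m hkm A v
    simp only [Jhat_Psi J z0 hz0 k m hmk A, SFun_quat J hJ, map_add, map_sum, map_smul]
end
end

section
/- (Hermiticity of the conformal hyper-Kähler metric.) With the data and definitions of the hat construction and the metric ĝ built from a symmetric bilinear form h on W, if h is hermitian with respect to the quaternionic triple on W, i.e. h(J^a w, J^a w') = h(w, w') for each a ∈ {1,2,3} and all w,w' ∈ W, then ĝ is hermitian with respect to each Ĵ^a: ĝ(Ĵ^a X̂, Ĵ^a Ŷ) = ĝ(X̂, Ŷ) for each a ∈ {1,2,3} and all X̂, Ŷ ∈ V̂. -/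
noncomputable section

/-- `θ^0` on `V̂ = ℝ ⊕ ℝ^3 ⊕ W`. -/
def theta0 {W : Type*} [AddCommGroup W] [Module ℝ W]
    (v : ℝ × (Fin 3 → ℝ) × W) : ℝ := v.1

/-- `θ^α` on `V̂ = ℝ ⊕ ℝ^3 ⊕ W`: `θ^α(e_β) = δ^α_β`, `θ^α(w) = Σ_a A^a(w) k^α{}_a`. -/
def thetaV {W : Type*} [AddCommGroup W] [Module ℝ W]
    (k : Fin 3 → Fin 3 → ℝ) (A : Fin 3 → W →ₗ[ℝ] ℝ) (α : Fin 3)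
    (v : ℝ × (Fin 3 → ℝ) × W) : ℝ :=
  v.2.1 α + ∑ a, A a v.2.2 * k α a

/-- The metric `ĝ = -(1/z^0) θ^0 ⊗ θ^0 + z^0 h - z^0 Σ_{α,β} (Σ_a m^a{}_α m^a{}_β) θ^α ⊗ θ^β`. -/
def ghat {W : Type*} [AddCommGroup W] [Module ℝ W]
    (z0 : ℝ) (k m : Fin 3 → Fin 3 → ℝ) (A : Fin 3 → W →ₗ[ℝ] ℝ)
    (h : W →ₗ[ℝ] W →ₗ[ℝ] ℝ) (v w : ℝ × (Fin 3 → ℝ) × W) : ℝ :=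
  -(1/z0) * theta0 v * theta0 w + z0 * h v.2.2 w.2.2
    - z0 * ∑ α, ∑ β, (∑ a, m a α * m a β) * thetaV k A α v * thetaV k A β w

/-- The frame components `P_b = Σ_α m^b_α x^α + A^b(w)`. -/
def PP {W : Type*} [AddCommGroup W] [Module ℝ W]
    (m : Fin 3 → Fin 3 → ℝ) (A : Fin 3 → W →ₗ[ℝ] ℝ) (b : Fin 3)
    (v : ℝ × (Fin 3 → ℝ) × W) : ℝ :=
  (∑ α, m b α * v.2.1 α) + A b v.2.2

theorem sum_m_k {k m : Fin 3 → Fin 3 → ℝ}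
    (hmk : ∀ a b, (∑ β, m a β * k β b) = if a = b then 1 else 0) (b : Fin 3) (f : Fin 3 → ℝ) :
    ∑ β, m b β * ∑ c, f c * k β c = f b := by
  have : ∑ β, m b β * ∑ c, f c * k β c = ∑ c, f c * ∑ β, m b β * k β c := by
    simp only [Finset.mul_sum]
    rw [Finset.sum_comm]
    exact Finset.sum_congr rfl fun _ _ => Finset.sum_congr rfl fun _ _ => by ring
  rw [this]
  simp [hmk]

theorem sum_m_theta {W : Type*} [AddCommGroup W] [Module ℝ W] {k m : Fin 3 → Fin 3 → ℝ}
    (hmk : ∀ a b, (∑ β, m a β * k β b) = if a = b then 1 else 0)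
    (A : Fin 3 → W →ₗ[ℝ] ℝ) (b : Fin 3) (v : ℝ × (Fin 3 → ℝ) × W) :
    ∑ α, m b α * thetaV k A α v = PP m A b v := by
  simp only [thetaV, mul_add, Finset.sum_add_distrib, PP]
  rw [sum_m_k hmk b (fun c => A c v.2.2)]

theorem ghat_eq {W : Type*} [AddCommGroup W] [Module ℝ W] {k m : Fin 3 → Fin 3 → ℝ}
    (hmk : ∀ a b, (∑ β, m a β * k β b) = if a = b then 1 else 0) (z0 : ℝ)
    (A : Fin 3 → W →ₗ[ℝ] ℝ) (h : W →ₗ[ℝ] W →ₗ[ℝ] ℝ) (v w : ℝ × (Fin 3 → ℝ) × W) :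
    ghat z0 k m A h v w = -(1/z0) * v.1 * w.1 + z0 * h v.2.2 w.2.2
      - z0 * ∑ b, PP m A b v * PP m A b w := by
  simp only [ghat, theta0, ← sum_m_theta hmk]
  congr 2
  simp only [Fin.sum_univ_three]
  ring

theorem theta_Jhat {W : Type*} [AddCommGroup W] [Module ℝ W]
    (J : Fin 3 → Module.End ℝ W) (z0 : ℝ) (k m : Fin 3 → Fin 3 → ℝ)
    (A : Fin 3 → W →ₗ[ℝ] ℝ) (a β : Fin 3) (v : ℝ × (Fin 3 → ℝ) × W) :
    thetaV k A β (JhatFun J z0 k m A a v)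
      = ∑ c, ((if a = c then v.1 / z0 else 0) + ∑ b, eps3 a b c * PP m A b v) * k β c := by
  have : ∑ c, (if a = c then v.1 / z0 else 0) * k β c = (1/z0) * k β a * v.1 := by
    simp; ring
  simp only [add_mul, Finset.sum_add_distrib, this]
  simp only [thetaV, JhatFun, PP, Fin.sum_univ_three]
  ring

theorem PP_Jhat {W : Type*} [AddCommGroup W] [Module ℝ W]
    (J : Fin 3 → Module.End ℝ W) (z0 : ℝ) {k m : Fin 3 → Fin 3 → ℝ}
    (hmk : ∀ a b, (∑ β, m a β * k β b) = if a = b then 1 else 0)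
    (A : Fin 3 → W →ₗ[ℝ] ℝ) (a b : Fin 3) (v : ℝ × (Fin 3 → ℝ) × W) :
    PP m A b (JhatFun J z0 k m A a v)
      = (if a = b then v.1 / z0 else 0) + ∑ d, eps3 a d b * PP m A d v := by
  rw [← sum_m_theta hmk]
  simp only [theta_Jhat]
  exact sum_m_k hmk b
    (fun c => (if a = c then v.1 / z0 else 0) + ∑ b, eps3 a b c * PP m A b v)

/-- if `h` is hermitian with respect to the quaternionic triple on `W`, then
the metric `ĝ` of the hat construction is hermitian with respect to each `Ĵ^a`. -/
theorem stmt12 {W : Type*} [AddCommGroup W] [Module ℝ W] [FiniteDimensional ℝ W]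
    (J : Fin 3 → Module.End ℝ W) (hJ : IsQuatTriple J)
    (z0 : ℝ) (hz0 : z0 ≠ 0) (k m : Fin 3 → Fin 3 → ℝ)
    (hmk : ∀ a b, (∑ β, m a β * k β b) = if a = b then 1 else 0)
    (hkm : ∀ α β, (∑ a, k α a * m a β) = if α = β then 1 else 0)
    (A : Fin 3 → W →ₗ[ℝ] ℝ)
    (h : W →ₗ[ℝ] W →ₗ[ℝ] ℝ) (hsymm : ∀ w w', h w w' = h w' w)
    (hherm : ∀ (a : Fin 3) (w w' : W), h (J a w) (J a w') = h w w') :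
    ∀ (a : Fin 3) (v w : ℝ × (Fin 3 → ℝ) × W),
      ghat z0 k m A h (JhatFun J z0 k m A a v) (JhatFun J z0 k m A a w)
        = ghat z0 k m A h v w := by
  intro a v w
  rw [ghat_eq hmk, ghat_eq hmk]
  simp only [PP_Jhat J z0 hmk]
  have h1 : ∀ v : ℝ × (Fin 3 → ℝ) × W, (JhatFun J z0 k m A a v).1 = -z0 * PP m A a v :=
    fun _ => rfl
  have h2 : ∀ v : ℝ × (Fin 3 → ℝ) × W, (JhatFun J z0 k m A a v).2.2 = J a v.2.2 :=
    fun _ => rfl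
  rw [h1, h1, h2, h2, hherm]
  fin_cases a <;> simp [Fin.sum_univ_three, eps3] <;> field_simp <;> ring
end
end

section
/- (Signature of the conformal hyper-Kähler metric.) With the data and definitions of the hat construction and the metric ĝ built from h, suppose in addition that z^0 > 0, dim_ℝ W = 4n, and h is positive definite on W. Then V̂ admits a ĝ-orthogonal direct sum decomposition V̂ = V_- ⊕ V_+ with dim V_- = 4 and dim V_+ = 4n, such that ĝ is negative definite on V_- and positive definite on V_+; in particular ĝ is a nondegenerate symmetric bilinear form of signature (4, 4n). -/
noncomputable section

theorem ghat_neg_aux {W : Type*} [AddCommGroup W] [Module ℝ W]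
    (z0 : ℝ) (hz0 : 0 < z0) (k m : Fin 3 → Fin 3 → ℝ)
    (hkm : ∀ α β, (∑ a, k α a * m a β) = if α = β then 1 else 0)
    (A : Fin 3 → W →ₗ[ℝ] ℝ) (h : W →ₗ[ℝ] W →ₗ[ℝ] ℝ) (t : ℝ) (u : Fin 3 → ℝ)
    (hx : 0 ≤ ghat z0 k m A h (t, u, 0) (t, u, 0)) : t = 0 ∧ u = 0 := by
  have e : ghat z0 k m A h (t, u, 0) (t, u, 0)
      = -(1/z0 * t^2 + z0 * ∑ a, (∑ α, m a α * u α)^2) := by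
    simp only [ghat, theta0, thetaV, map_zero, zero_mul, Finset.sum_const_zero, add_zero,
      mul_zero, Fin.sum_univ_three]
    ring
  have h1 : 0 ≤ 1/z0 * t^2 := by positivity
  have hs : 0 ≤ ∑ a, (∑ α, m a α * u α)^2 := Finset.sum_nonneg fun a _ => sq_nonneg _
  have h2 : 0 ≤ z0 * ∑ a, (∑ α, m a α * u α)^2 := mul_nonneg hz0.le hs
  have h3 : 1/z0 * t^2 = 0 := by linarith
  have h4 : z0 * ∑ a, (∑ α, m a α * u α)^2 = 0 := by linarith
  have hz : (1/z0) ≠ 0 := by positivity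
  refine ⟨by simpa [hz, hz0.ne'] using h3, ?_⟩
  have h5 := (mul_eq_zero.mp h4).resolve_left hz0.ne'
  rw [Finset.sum_eq_zero_iff_of_nonneg fun a _ => sq_nonneg _] at h5
  have h6 : ∀ a, ∑ α, m a α * u α = 0 := fun a => by simpa using h5 a (Finset.mem_univ a)
  funext β
  calc u β = ∑ γ, (if β = γ then 1 else 0) * u γ := by simp
    _ = ∑ γ, (∑ a, k β a * m a γ) * u γ := by simp only [hkm]
    _ = ∑ a, k β a * ∑ γ, m a γ * u γ := by simp only [Fin.sum_univ_three]; ring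
    _ = 0 := by simp [h6]

/-- for `z^0 > 0`, `dim W = 4n` and `h` positive definite, the metric `ĝ` of
the hat construction has signature `(4, 4n)`: `V̂` splits `ĝ`-orthogonally into a
4-dimensional negative-definite and a `4n`-dimensional positive-definite summand, and `ĝ`
is nondegenerate. -/
theorem stmt13 {W : Type*} [AddCommGroup W] [Module ℝ W] [FiniteDimensional ℝ W]
    (n : ℕ) (hdim : Module.finrank ℝ W = 4 * n)
    (z0 : ℝ) (hz0 : 0 < z0) (k m : Fin 3 → Fin 3 → ℝ)
    (hmk : ∀ a b, (∑ β, m a β * k β b) = if a = b then 1 else 0)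
    (hkm : ∀ α β, (∑ a, k α a * m a β) = if α = β then 1 else 0)
    (A : Fin 3 → W →ₗ[ℝ] ℝ)
    (h : W →ₗ[ℝ] W →ₗ[ℝ] ℝ) (hsymm : ∀ w w', h w w' = h w' w)
    (hpos : ∀ w : W, w ≠ 0 → 0 < h w w) :
    ∃ Vneg Vpos : Submodule ℝ (ℝ × (Fin 3 → ℝ) × W),
      IsCompl Vneg Vpos ∧
      (∀ x ∈ Vneg, ∀ y ∈ Vpos, ghat z0 k m A h x y = 0) ∧
      Module.finrank ℝ Vneg = 4 ∧
      Module.finrank ℝ Vpos = 4 * n ∧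
      (∀ x ∈ Vneg, x ≠ 0 → ghat z0 k m A h x x < 0) ∧
      (∀ x ∈ Vpos, x ≠ 0 → 0 < ghat z0 k m A h x x) ∧
      (∀ x : ℝ × (Fin 3 → ℝ) × W, (∀ y, ghat z0 k m A h x y = 0) → x = 0) := by
  let f : (ℝ × (Fin 3 → ℝ)) →ₗ[ℝ] (ℝ × (Fin 3 → ℝ) × W) :=
    LinearMap.prodMap LinearMap.id (LinearMap.inl ℝ (Fin 3 → ℝ) W)
  let B : W →ₗ[ℝ] (Fin 3 → ℝ) := LinearMap.pi fun α => -∑ a, k α a • A a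
  let g : W →ₗ[ℝ] (ℝ × (Fin 3 → ℝ) × W) := LinearMap.prod 0 (LinearMap.prod B LinearMap.id)
  have hf : ∀ p, f p = (p.1, p.2, 0) := fun p => rfl
  have hg : ∀ w, g w = (0, B w, w) := fun w => rfl
  have hfi : Function.Injective f := by
    rintro ⟨a, b⟩ ⟨c, d⟩ hh
    simp only [hf, Prod.mk.injEq] at hh
    simp [hh.1, hh.2.1]
  have hgi : Function.Injective g := by
    intro a b hh
    simp only [hg, Prod.mk.injEq] at hh
    exact hh.2.2
  have hth : ∀ w α, thetaV k A α (0, B w, w) = 0 := by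
    intro w α
    simp [thetaV, B, mul_comm]
  have hgg : ∀ x w, ghat z0 k m A h x (0, B w, w) = z0 * h x.2.2 w := by
    intro x w
    simp [ghat, hth, theta0]
  refine ⟨LinearMap.range f, LinearMap.range g, ⟨?_, ?_⟩, ?_, ?_, ?_, ?_, ?_, ?_⟩
  · rw [Submodule.disjoint_def]
    rintro _ ⟨p, rfl⟩ ⟨w, hw⟩
    simp only [hf, hg, Prod.mk.injEq] at hw
    obtain ⟨h1, h2, h3⟩ := hw
    subst h3
    simp [hf, ← h1, ← h2]
  · rw [codisjoint_iff, eq_top_iff]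
    rintro ⟨t, u, w⟩ -
    refine Submodule.mem_sup.mpr ⟨f (t, u - B w), ⟨_, rfl⟩, g w, ⟨_, rfl⟩, ?_⟩
    simp [hf, hg]
  · rintro _ ⟨p, rfl⟩ _ ⟨w, rfl⟩
    rw [hg, hgg]
    simp [hf]
  · rw [LinearMap.finrank_range_of_inj hfi]
    simp
  · rw [LinearMap.finrank_range_of_inj hgi, hdim]
  · rintro _ ⟨⟨t, u⟩, rfl⟩ hne
    by_contra hlt
    rw [hf] at hlt
    obtain ⟨rfl, rfl⟩ := ghat_neg_aux z0 hz0 k m hkm A h t u (not_lt.mp hlt)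
    exact hne (by simp [hf])
  · rintro _ ⟨w, rfl⟩ hne
    rw [hg, hgg]
    exact mul_pos hz0 (hpos w (by rintro rfl; exact hne (map_zero g)))
  · rintro ⟨t, u, w⟩ hx
    have hw : w = 0 := by
      by_contra hw
      have h1 := hx (0, B w, w)
      rw [hgg] at h1
      exact (mul_pos hz0 (hpos w hw)).ne' h1
    subst hw
    obtain ⟨rfl, rfl⟩ := ghat_neg_aux z0 hz0 k m hkm A h t u (hx _).ge
    rfl
end
end

section
/- (The SU(2) vectors associated to a closed homothetic Killing vector.) Let U ⊆ E be open, let (J^1,J^2,J^3) be a smooth field of quaternionic triples on U, let Γ be torsionless connection coefficients on U with (∇_X J^a)_p = 0 for all a, p, X, and let k : U → E be a smooth vector field with (∇_X k)_p = (3/2) X for all p ∈ U and X ∈ E (a closed homothetic Killing vector with w = 3). Define the vector fields k^a := (1/3) J^a k, i.e. k^a(p) = (1/3) J^a_p(k(p)). Then their Lie brackets satisfy [k^a, k^b](p) := (Dk^b)_p(k^a(p)) - (Dk^a)_p(k^b(p)) = -Σ_c ε^{abc} k^c(p) for all a,b and p ∈ U (so k^1,k^2,k^3 close into the Lie algebra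 su(2)), and moreover [k, k^a] = 0 for each a. -/
noncomputable section

/-- The SU(2) vector fields `k^a = (1/3) J^a k`. -/
def kvec {E : Type*} [NormedAddCommGroup E] [NormedSpace ℝ E]
    (J : E → Fin 3 → E →L[ℝ] E) (k : E → E) (a : Fin 3) : E → E :=
  fun q => (3 : ℝ)⁻¹ • J q a (k q)

/-- for a closed homothetic Killing vector `k` (with `w = 3`) on a conformal
hypercomplex manifold, the vector fields `k^a = (1/3) J^a k` satisfy
`[k^a, k^b] = -Σ_c ε^{abc} k^c` (the algebra `su(2)`) and `[k, k^a] = 0`. -/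
theorem stmt15 {E : Type*} [NormedAddCommGroup E] [NormedSpace ℝ E] [FiniteDimensional ℝ E]
    (U : Set E) (hU : IsOpen U)
    (J : E → Fin 3 → E →L[ℝ] E) (Γ : E → E →L[ℝ] E →L[ℝ] E) (k : E → E)
    (hJsm : ContDiffOn ℝ (⊤ : ℕ∞) J U) (hΓsm : ContDiffOn ℝ (⊤ : ℕ∞) Γ U)
    (hksm : ContDiffOn ℝ (⊤ : ℕ∞) k U)
    (hquat : ∀ p ∈ U, IsQuatTripleCLM (J p))
    (htor : ∀ p ∈ U, ∀ X Y : E, Γ p X Y = Γ p Y X)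
    (hJpar : ∀ p ∈ U, ∀ (a : Fin 3) (X : E),
      fderiv ℝ (fun q => J q a) p X
        + (Γ p X).comp (J p a) - (J p a).comp (Γ p X) = 0)
    (hk : ∀ p ∈ U, ∀ X : E, fderiv ℝ k p X + Γ p X (k p) = (3/2 : ℝ) • X) :
    (∀ a b : Fin 3, ∀ p ∈ U,
      fderiv ℝ (kvec J k b) p (kvec J k a p) - fderiv ℝ (kvec J k a) p (kvec J k b p)
        = -∑ c, eps3 a b c • kvec J k c p) ∧
    (∀ a : Fin 3, ∀ p ∈ U,
      fderiv ℝ (kvec J k a) p (k p) - fderiv ℝ k p (kvec J k a p) = 0) := by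
  have key : ∀ a : Fin 3, ∀ p ∈ U, ∀ X : E, fderiv ℝ (kvec J k a) p X
      = (2 : ℝ)⁻¹ • J p a X - Γ p X (kvec J k a p) := by
    intro a p hp X
    have hJd : DifferentiableAt ℝ (fun q => J q a) p := by
      have h := (hJsm.contDiffAt (hU.mem_nhds hp)).differentiableAt (by simp)
      exact (differentiableAt_pi.1 h) a
    have hkd : DifferentiableAt ℝ k p :=
      (hksm.contDiffAt (hU.mem_nhds hp)).differentiableAt (by simp)
    have h1 := ((hJd.hasFDerivAt.clm_apply hkd.hasFDerivAt).const_smul (3 : ℝ)⁻¹).fderiv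
    have h2 : fderiv ℝ (kvec J k a) p X
        = (3 : ℝ)⁻¹ • (J p a (fderiv ℝ k p X) + fderiv ℝ (fun q => J q a) p X (k p)) := by
      have h3 := congrArg (fun L : E →L[ℝ] E => L X) h1
      simp at h3
      rw [smul_add]
      exact h3
    have h4 : fderiv ℝ (fun q => J q a) p X (k p) = J p a (Γ p X (k p)) - Γ p X (J p a (k p)) := by
      have h5 := congrArg (fun L : E →L[ℝ] E => L (k p)) (hJpar p hp a X)
      simp at h5
      rw [sub_eq_zero] at h5
      rw [← h5]; abel
    have h6 : fderiv ℝ k p X = (3/2 : ℝ) • X - Γ p X (k p) := by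
      rw [← hk p hp X]; abel
    rw [h2, h4, h6]
    simp only [kvec, map_sub, map_smul]
    module
  have hcomp : ∀ p ∈ U, ∀ a b : Fin 3, ∀ v : E, J p a (J p b v)
      = -(if a = b then v else 0) + ∑ c, eps3 a b c • J p c v := by
    intro p hp a b v
    have h := congrArg (fun L : E →L[ℝ] E => L v) (hquat p hp a b)
    by_cases hab : a = b
    · simpa [hab] using h
    · simpa [hab] using h
  constructor
  · intro a b p hp
    rw [key b p hp, key a p hp, htor p hp (kvec J k a p) (kvec J k b p)]
    simp only [kvec, map_smul]
    rw [hcomp p hp a b, hcomp p hp b a]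
    have hab : (if b = a then k p else 0) = (if a = b then k p else 0) := by
      simp only [eq_comm]
    rw [hab]
    simp only [Fin.sum_univ_three]
    have he : ∀ c, eps3 b a c = - eps3 a b c := by
      intro c; unfold eps3; ring
    simp only [he]
    module
  · intro a p hp
    have h6 : fderiv ℝ k p (kvec J k a p)
        = (3/2 : ℝ) • kvec J k a p - Γ p (kvec J k a p) (k p) := by
      rw [← hk p hp]; abel
    rw [key a p hp, h6, htor p hp (kvec J k a p) (k p)]
    simp only [kvec]
    module
end
end
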